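/- Let H > 0 and 0 < r < 1/(2H). Let D(r) ⊆ ℝ² be the open disk of center 0 and radius r, set z₀ = (1/(2H), 0), and define C = {p ∈ D(r) : |p − z₀| = 1/(2H)}, D⁻ = {p ∈ D(r) : |p − z₀| > 1/(2H)} (the component of D(r) \ C containing (−r,0)). Let (u_n) be a sequence of solutions of (CMC) on D⁻ converging to a solution u of (CMC) on D⁻ (u_n → u and ∇u_n → ∇u uniformly on every compact subset of D⁻). Suppose that at least one of the following holds: (1a) for every n, u_n tends to −∞ at every point of C (for all P ∈ C, M ∈ ℝ there is δ > 0 with u_n < −M on D⁻ ∩ B(P,δ)); or (1b) for every n, u_n is the restriction to D⁻ of a solution v_n of (CMC) on D(r), and C is a divergence line of (v_n). Then u tends to −∞ at every point of C: for every P ∈ C and M ∈ ℝ there is δ > 0 with u < −M on D⁻ ∩ B(P,δ). -/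

import Mathlib

open Real MeasureTheory Filter Set

noncomputable section

/-- Euclidean norm on `ℝ × ℝ`. -/
def enorm2 (p : ℝ × ℝ) : ℝ := Real.sqrt (p.1 ^ 2 + p.2 ^ 2)

/-- Partial derivative in the `x` direction. -/
def pdx (u : ℝ × ℝ → ℝ) (p : ℝ × ℝ) : ℝ := fderiv ℝ u p (1, 0)

/-- Partial derivative in the `y` direction. -/
def pdy (u : ℝ × ℝ → ℝ) (p : ℝ × ℝ) : ℝ := fderiv ℝ u p (0, 1)

/-- The area element `W_u = √(1 + |∇u|²)`. -/
def Wgraph (u : ℝ × ℝ → ℝ) (p : ℝ × ℝ) : ℝ :=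
  Real.sqrt (1 + (pdx u p) ^ 2 + (pdy u p) ^ 2)

/-- Upward unit normal of the graph of `u`. -/
def normalVec (u : ℝ × ℝ → ℝ) (p : ℝ × ℝ) : ℝ × ℝ × ℝ :=
  (-pdx u p / Wgraph u p, -pdy u p / Wgraph u p, 1 / Wgraph u p)

/-- `u` is a (C²) solution of the constant mean curvature `H` equation on `Ω`. -/
def IsCMCSolution (H : ℝ) (Ω : Set (ℝ × ℝ)) (u : ℝ × ℝ → ℝ) : Prop :=
  ContDiffOn ℝ 2 u Ω ∧ ∀ p ∈ Ω,
    (1 + (pdy u p) ^ 2) * pdx (fun q => pdx u q) p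
      - 2 * (pdx u p) * (pdy u p) * pdy (fun q => pdx u q) p
      + (1 + (pdx u p) ^ 2) * pdy (fun q => pdy u q) p
    = 2 * H * (1 + (pdx u p) ^ 2 + (pdy u p) ^ 2) ^ ((3 : ℝ) / 2)

/-- `C` is a divergence line of the sequence `u` on `Ω`. -/
def IsDivergenceLine (H : ℝ) (Ω : Set (ℝ × ℝ)) (u : ℕ → ℝ × ℝ → ℝ)
    (C : Set (ℝ × ℝ)) : Prop :=
  ∃ z₁ : ℝ × ℝ, C ⊆ Ω ∧ (∀ q ∈ C, enorm2 (q - z₁) = 1 / (2 * H)) ∧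
    IsConnected C ∧ C.Nontrivial ∧
    ∃ φ : ℕ → ℕ, StrictMono φ ∧ ∀ Q ∈ C,
      Tendsto (fun n => normalVec (u (φ n)) Q) atTop
        (nhds (2 * H * (z₁.1 - Q.1), 2 * H * (z₁.2 - Q.2), 0))

/-!
In polar coordinates centred at the centre of the circle, and over a thin sector outside its arc of
radius `R = 1 / (2 * H)`, an explicit barrier has mean curvature less than `H` and is infinite on
the lateral sides of the sector. Multiplying the difference of the two mean curvature equations by
a cutoff of the excess of `u n` over the barrier and integrating, the monotonicity of
`p ↦ p / √(1 + |p|²)` leaves only the flux through the arc of radius `R`. There is no such flux if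
`u n` tends to `-∞` on that arc, and if the arc is a divergence line the flux tends to `0` by
dominated convergence. So the limit is nowhere above the barrier. The barriers form a family with a
parameter `η`, and `η = s - R` at a point at distance `s` from the centre gives a bound which tends
to `-∞` as `s → R`.
-/

open scoped Topology InnerProductSpace

lemma enorm2_eq_norm (p : ℝ × ℝ) : enorm2 p = ‖Complex.equivRealProdCLM.symm p‖ := by
  rw [enorm2, Complex.equivRealProdCLM_symm_apply, Complex.norm_add_mul_I]

lemma enorm2_sub (p q : ℝ × ℝ) : enorm2 (p - q) =
    dist (Complex.equivRealProdCLM.symm p) (Complex.equivRealProdCLM.symm q) := by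
  rw [enorm2_eq_norm, map_sub, dist_eq_norm]

lemma continuous_enorm2 : Continuous enorm2 := by
  unfold enorm2
  fun_prop

lemma hasBasis_nhds_enorm2 (P : ℝ × ℝ) :
    (𝓝 P).HasBasis (0 < ·) fun δ => {Q | enorm2 (Q - P) < δ} := by
  have h := (Metric.nhds_basis_ball (x := Complex.equivRealProdCLM.symm P)).comap
    Complex.equivRealProdCLM.symm
  have hind : Topology.IsInducing Complex.equivRealProdCLM.symm :=
    Complex.equivRealProdCLM.symm.toHomeomorph.isInducing
  rw [← hind.nhds_eq_comap P] at h
  simp only [enorm2_sub]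
  exact h

lemma tendsto_nhdsWithin_atBot_iff {f : ℝ × ℝ → ℝ} {D : Set (ℝ × ℝ)} {P : ℝ × ℝ} :
    Tendsto f (𝓝[D] P) atBot ↔
      ∀ M : ℝ, ∃ δ > 0, ∀ Q ∈ D, enorm2 (Q - P) < δ → f Q < -M := by
  rw [(nhdsWithin_hasBasis (hasBasis_nhds_enorm2 P) D).tendsto_iff atBot_basis_Iio,
    neg_surjective.forall]
  simp only [true_imp_iff, mem_inter_iff, mem_ofPred_eq, mem_Iio, and_imp]
  exact forall_congr' fun M => exists_congr fun δ => and_congr_right fun _ =>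
    forall_congr' fun Q => forall_comm

lemma eq_center_of_infinite {C : Set (ℝ × ℝ)} {z z' : ℝ × ℝ} {R : ℝ} (hC : C.Infinite)
    (hz : ∀ p ∈ C, enorm2 (p - z) = R) (hz' : ∀ p ∈ C, enorm2 (p - z') = R) : z = z' := by
  let e := Complex.equivRealProdCLM.symm
  simp only [enorm2_sub] at hz hz'
  obtain ⟨t, htC, ht⟩ := hC.exists_subset_card_eq 3
  obtain ⟨p, q, w, hpq, hpw, hqw, rfl⟩ := Finset.card_eq_three.1 ht
  simp only [Finset.coe_insert, Finset.coe_singleton, insert_subset_iff,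
    singleton_subset_iff] at htC
  obtain ⟨hp, hq, hw⟩ := htC
  by_contra hne
  have := EuclideanGeometry.eq_of_dist_eq_of_dist_eq_of_finrank_eq_two
    Complex.finrank_real_complex (e.injective.ne hne) (e.injective.ne hpq)
    (hz p hp) (hz q hq) (hz w hw) (hz' p hp) (hz' q hq) (hz' w hw)
  exact this.elim (fun h => hpw (e.injective h).symm) fun h => hqw (e.injective h).symm

/-! ### Partial derivatives and the unit normal -/

lemma fderiv_apply_eq (f : ℝ × ℝ → ℝ) (p w : ℝ × ℝ) :
    fderiv ℝ f p w = w.1 * pdx f p + w.2 * pdy f p := by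
  have hw : w = w.1 • ((1 : ℝ), (0 : ℝ)) + w.2 • ((0 : ℝ), (1 : ℝ)) := by ext <;> simp
  conv_lhs => rw [hw, map_add, map_smul, map_smul]
  rfl

lemma hasDerivAt_comp_eq {f : ℝ × ℝ → ℝ} {γ : ℝ → ℝ × ℝ} {w : ℝ × ℝ} {t : ℝ}
    (hf : DifferentiableAt ℝ f (γ t)) (hγ : HasDerivAt γ w t) :
    HasDerivAt (fun τ => f (γ τ)) (w.1 * pdx f (γ t) + w.2 * pdy f (γ t)) t := by
  rw [← fderiv_apply_eq]
  exact hf.hasFDerivAt.comp_hasDerivAt t hγ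

section Slices

variable {f : ℝ × ℝ → ℝ} {x : ℝ × ℝ}

lemma hasDerivAt_slice_fst (hf : DifferentiableAt ℝ f x) :
    HasDerivAt (fun s => f (s, x.2)) (pdx f x) x.1 := by
  simpa using hasDerivAt_comp_eq (γ := fun s => (s, x.2)) hf
    ((hasDerivAt_id x.1).prodMk (hasDerivAt_const x.1 x.2))

lemma hasDerivAt_slice_snd (hf : DifferentiableAt ℝ f x) :
    HasDerivAt (fun t => f (x.1, t)) (pdy f x) x.2 := by
  simpa using hasDerivAt_comp_eq (γ := fun t => (x.1, t)) hf
    ((hasDerivAt_const x.2 x.1).prodMk (hasDerivAt_id x.2))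

lemma pdx_eq_of_hasDerivAt {d : ℝ} (hf : DifferentiableAt ℝ f x)
    (h : HasDerivAt (fun s => f (s, x.2)) d x.1) : pdx f x = d :=
  (hasDerivAt_slice_fst hf).unique h

lemma pdy_eq_of_hasDerivAt {d : ℝ} (hf : DifferentiableAt ℝ f x)
    (h : HasDerivAt (fun t => f (x.1, t)) d x.2) : pdy f x = d :=
  (hasDerivAt_slice_snd hf).unique h

lemma contDiffAt_pdx {m n : WithTop ℕ∞} (hf : ContDiffAt ℝ n f x) (hmn : m + 1 ≤ n) :
    ContDiffAt ℝ m (pdx f) x :=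
  (hf.fderiv_right hmn).clm_apply contDiffAt_const

lemma contDiffAt_pdy {m n : WithTop ℕ∞} (hf : ContDiffAt ℝ n f x) (hmn : m + 1 ≤ n) :
    ContDiffAt ℝ m (pdy f) x :=
  (hf.fderiv_right hmn).clm_apply contDiffAt_const

lemma pdy_pdx_comm (hf : ContDiffAt ℝ 2 f x) : pdy (pdx f) x = pdx (pdy f) x := by
  have hd : DifferentiableAt ℝ (fderiv ℝ f) x :=
    (hf.fderiv_right (m := 1) (by norm_num)).differentiableAt one_ne_zero
  have hsnd (w z : ℝ × ℝ) :
      fderiv ℝ (fun q => fderiv ℝ f q w) x z = fderiv ℝ (fderiv ℝ f) x z w := by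
    rw [fderiv_clm_apply hd (differentiableAt_const _)]
    simp
  unfold pdx pdy
  rw [hsnd, hsnd, (hf.isSymmSndFDerivAt (by simp)).eq]

end Slices

lemma hasFDerivAt_div_sqrt {E : Type*} [NormedAddCommGroup E] [NormedSpace ℝ E] {f g : E → ℝ}
    {f' g' : E →L[ℝ] ℝ} {x : E} (hf : HasFDerivAt f f' x) (hg : HasFDerivAt g g' x) :
    HasFDerivAt (fun y => f y / √(1 + f y ^ 2 + g y ^ 2))
      ((√(1 + f x ^ 2 + g x ^ 2) ^ 3)⁻¹ • ((1 + g x ^ 2) • f' - (f x * g x) • g')) x := by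
  have hpos : 0 < 1 + f x ^ 2 + g x ^ 2 := by positivity
  have hW : √(1 + f x ^ 2 + g x ^ 2) ≠ 0 := (sqrt_pos.2 hpos).ne'
  have hsq : √(1 + f x ^ 2 + g x ^ 2) ^ 2 = 1 + f x ^ 2 + g x ^ 2 := sq_sqrt hpos.le
  have h := hf.fun_mul ((hasDerivAt_inv hW).comp_hasFDerivAt x
    ((((hf.pow 2).const_add 1).add (hg.pow 2)).sqrt hpos.ne'))
  refine h.congr_fderiv ?_
  ext w
  simp only [add_apply, sub_apply, smul_apply, smul_eq_mul, nsmul_eq_mul, Nat.cast_ofNat,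
    Nat.add_one_sub_one, pow_one, Function.comp_apply, Pi.add_apply]
  set W := √(1 + f x ^ 2 + g x ^ 2)
  field_simp
  linear_combination f' w * hsq

lemma Wgraph_pos (u : ℝ × ℝ → ℝ) (p : ℝ × ℝ) : 0 < Wgraph u p :=
  sqrt_pos.2 (by positivity)

section UnitNormal

variable {f g : ℝ × ℝ → ℝ} {x : ℝ × ℝ}

lemma contDiffAt_div_sqrt {E : Type*} [NormedAddCommGroup E] [NormedSpace ℝ E] {f g : E → ℝ}
    {x : E} {n : WithTop ℕ∞} (hf : ContDiffAt ℝ n f x) (hg : ContDiffAt ℝ n g x) :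
    ContDiffAt ℝ n (fun y => f y / √(1 + f y ^ 2 + g y ^ 2)) x :=
  hf.div (((contDiffAt_const.add (hf.pow 2)).add (hg.pow 2)).sqrt (by positivity))
    (sqrt_pos.2 (by positivity)).ne'

lemma inner_sub_div_sqrt_nonneg {E : Type*} [NormedAddCommGroup E] [InnerProductSpace ℝ E]
    (p q : E) :
    0 ≤ ⟪p - q, (√(1 + ‖p‖ ^ 2))⁻¹ • p - (√(1 + ‖q‖ ^ 2))⁻¹ • q⟫_ℝ := by
  have hp : 0 < 1 + ‖p‖ ^ 2 := by positivity
  have hq : 0 < 1 + ‖q‖ ^ 2 := by positivity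
  have hV := sqrt_pos.2 hp
  have hW := sqrt_pos.2 hq
  have hle : 1 + ⟪p, q⟫_ℝ ≤ √(1 + ‖p‖ ^ 2) * √(1 + ‖q‖ ^ 2) := by
    rw [← sqrt_mul hp.le]
    refine le_sqrt_of_sq_le ?_
    have h := abs_le.1 (abs_real_inner_le_norm p q)
    nlinarith [sq_nonneg (‖p‖ - ‖q‖)]
  have hVsq := sq_sqrt hp.le
  have hWsq := sq_sqrt hq.le
  simp only [inner_sub_left, inner_sub_right, real_inner_smul_right, real_inner_self_eq_norm_sq,
    real_inner_comm p q]
  set V := √(1 + ‖p‖ ^ 2)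
  set W := √(1 + ‖q‖ ^ 2)
  have key : V⁻¹ * ‖p‖ ^ 2 - V⁻¹ * ⟪p, q⟫_ℝ - (W⁻¹ * ⟪p, q⟫_ℝ - W⁻¹ * ‖q‖ ^ 2)
      = (V + W) * (V * W - (1 + ⟪p, q⟫_ℝ)) / (V * W) := by
    field_simp
    linear_combination (-W) * hVsq - V * hWsq
  rw [key]
  exact div_nonneg (mul_nonneg (by positivity) (by linarith)) (by positivity)

lemma sub_mul_div_sqrt_add_nonneg (a₁ a₂ b₁ b₂ : ℝ) :
    0 ≤ (a₁ - b₁) * (a₁ / √(1 + a₁ ^ 2 + a₂ ^ 2) - b₁ / √(1 + b₁ ^ 2 + b₂ ^ 2))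
      + (a₂ - b₂) * (a₂ / √(1 + a₁ ^ 2 + a₂ ^ 2) - b₂ / √(1 + b₁ ^ 2 + b₂ ^ 2)) := by
  have h := inner_sub_div_sqrt_nonneg !₂[a₁, a₂] !₂[b₁, b₂]
  simpa [PiLp.inner_apply, EuclideanSpace.norm_sq_eq, div_eq_inv_mul, add_assoc, mul_comm]
    using h

lemma pdx_div_sqrt (hf : DifferentiableAt ℝ f x) (hg : DifferentiableAt ℝ g x) :
    pdx (fun y => f y / √(1 + f y ^ 2 + g y ^ 2)) x
      = ((1 + g x ^ 2) * pdx f x - f x * g x * pdx g x) / √(1 + f x ^ 2 + g x ^ 2) ^ 3 := by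
  rw [pdx, (hasFDerivAt_div_sqrt hf.hasFDerivAt hg.hasFDerivAt).fderiv, div_eq_inv_mul]
  rfl

lemma pdy_div_sqrt (hf : DifferentiableAt ℝ f x) (hg : DifferentiableAt ℝ g x) :
    pdy (fun y => g y / √(1 + f y ^ 2 + g y ^ 2)) x
      = ((1 + f x ^ 2) * pdy g x - f x * g x * pdy f x) / √(1 + f x ^ 2 + g x ^ 2) ^ 3 := by
  simp_rw [add_right_comm (1 : ℝ) (f _ ^ 2)]
  rw [pdy, (hasFDerivAt_div_sqrt hg.hasFDerivAt hf.hasFDerivAt).fderiv, div_eq_inv_mul,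
    mul_comm (f x)]
  rfl

variable {u : ℝ × ℝ → ℝ}

lemma contDiffAt_normalVec_fst (hu : ContDiffAt ℝ 2 u x) :
    ContDiffAt ℝ 1 (fun q => (normalVec u q).1) x := by
  simp_rw [normalVec, neg_div]
  exact (contDiffAt_div_sqrt (contDiffAt_pdx hu one_add_one_eq_two.le)
    (contDiffAt_pdy hu one_add_one_eq_two.le)).neg

lemma contDiffAt_normalVec_snd (hu : ContDiffAt ℝ 2 u x) :
    ContDiffAt ℝ 1 (fun q => (normalVec u q).2.1) x := by
  simp_rw [normalVec, neg_div, Wgraph, add_right_comm (1 : ℝ) (pdx u _ ^ 2)]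
  exact (contDiffAt_div_sqrt (contDiffAt_pdy hu one_add_one_eq_two.le)
    (contDiffAt_pdx hu one_add_one_eq_two.le)).neg

lemma pdx_normalVec_add_pdy_normalVec (hu : ContDiffAt ℝ 2 u x) :
    pdx (fun q => (normalVec u q).1) x + pdy (fun q => (normalVec u q).2.1) x
      = -(((1 + pdy u x ^ 2) * pdx (pdx u) x - 2 * pdx u x * pdy u x * pdy (pdx u) x
        + (1 + pdx u x ^ 2) * pdy (pdy u) x) / Wgraph u x ^ 3) := by
  have hx := (contDiffAt_pdx hu one_add_one_eq_two.le).differentiableAt one_ne_zero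
  have hy := (contDiffAt_pdy hu one_add_one_eq_two.le).differentiableAt one_ne_zero
  have hfst : (fun q => (normalVec u q).1)
      = -fun q => pdx u q / √(1 + pdx u q ^ 2 + pdy u q ^ 2) := funext fun q => neg_div ..
  have hsnd : (fun q => (normalVec u q).2.1)
      = -fun q => pdy u q / √(1 + pdx u q ^ 2 + pdy u q ^ 2) := funext fun q => neg_div ..
  have hneg (f : ℝ × ℝ → ℝ) : pdx (-f) x = -pdx f x ∧ pdy (-f) x = -pdy f x := by
    simp [pdx, pdy, fderiv_neg]
  rw [hfst, hsnd, (hneg _).1, (hneg _).2, pdx_div_sqrt hx hy, pdy_div_sqrt hx hy,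
    ← pdy_pdx_comm hu, Wgraph]
  ring

end UnitNormal

namespace IsCMCSolution

variable {H : ℝ} {Ω : Set (ℝ × ℝ)} {u : ℝ × ℝ → ℝ}

lemma contDiffAt (hu : IsCMCSolution H Ω u) (hΩ : IsOpen Ω) {p : ℝ × ℝ} (hp : p ∈ Ω) :
    ContDiffAt ℝ 2 u p :=
  hu.1.contDiffAt (hΩ.mem_nhds hp)

lemma div_normalVec (hu : IsCMCSolution H Ω u) (hΩ : IsOpen Ω) {p : ℝ × ℝ} (hp : p ∈ Ω) :
    pdx (fun q => (normalVec u q).1) p + pdy (fun q => (normalVec u q).2.1) p = -(2 * H) := by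
  have hpow : (1 + pdx u p ^ 2 + pdy u p ^ 2) ^ ((3 : ℝ) / 2) = Wgraph u p ^ 3 := by
    rw [Wgraph, sqrt_eq_rpow, ← rpow_mul_natCast (by positivity)]
    norm_num
  rw [pdx_normalVec_add_pdy_normalVec (hu.contDiffAt hΩ hp), neg_inj,
    div_eq_iff (pow_pos (Wgraph_pos u p) 3).ne', ← hpow]
  exact hu.2 p hp

end IsCMCSolution

/-! ### Polar coordinates -/

/-- The point with polar coordinates `x = (s, θ)` about the centre `z`, the angle `θ` being measured
from the direction `(cos c, sin c)`. -/
def polar (z : ℝ × ℝ) (c : ℝ) (x : ℝ × ℝ) : ℝ × ℝ :=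
  (z.1 + x.1 * cos (c + x.2), z.2 + x.1 * sin (c + x.2))

/-- The area element of the graph of a function `U` of the polar coordinates `x = (s, θ)`, whose
Euclidean gradient has the radial component `∂_s U` and the angular component `s⁻¹ ∂_θ U`. -/
def polarW (U : ℝ × ℝ → ℝ) (x : ℝ × ℝ) : ℝ := √(1 + pdx U x ^ 2 + (pdy U x / x.1) ^ 2)

/-- The radial component of the field `∇U / W`, for a function `U` of the polar coordinates. -/
def radialFlux (U : ℝ × ℝ → ℝ) (x : ℝ × ℝ) : ℝ := pdx U x / polarW U x

/-- The angular component of the field `∇U / W`, for a function `U` of the polar coordinates. -/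
def angularFlux (U : ℝ × ℝ → ℝ) (x : ℝ × ℝ) : ℝ := pdy U x / x.1 / polarW U x

/-- The divergence of `∇U / W` multiplied by the polar area density `s`, for a function `U` of the
polar coordinates `(s, θ)`; it equals `2 H s` when the graph of `U` has mean curvature `H`. -/
def polarDiv (U : ℝ × ℝ → ℝ) (x : ℝ × ℝ) : ℝ :=
  pdx (fun y => y.1 * radialFlux U y) x + pdy (angularFlux U) x

lemma polarW_pos (U : ℝ × ℝ → ℝ) (x : ℝ × ℝ) : 0 < polarW U x :=
  sqrt_pos.2 (by positivity)

lemma abs_radialFlux_le_one (U : ℝ × ℝ → ℝ) (x : ℝ × ℝ) : |radialFlux U x| ≤ 1 := by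
  rw [radialFlux, abs_div, abs_of_pos (polarW_pos U x), div_le_one (polarW_pos U x)]
  exact abs_le_sqrt (by nlinarith [sq_nonneg (pdy U x / x.1)])

section Regularity

variable {U : ℝ × ℝ → ℝ} {x : ℝ × ℝ}

lemma contDiffAt_pdy_div (hU : ContDiffAt ℝ 2 U x) (hx : x.1 ≠ 0) :
    ContDiffAt ℝ 1 (fun y => pdy U y / y.1) x :=
  (contDiffAt_pdy hU one_add_one_eq_two.le).div contDiffAt_fst hx

lemma contDiffAt_radialFlux (hU : ContDiffAt ℝ 2 U x) (hx : x.1 ≠ 0) :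
    ContDiffAt ℝ 1 (radialFlux U) x :=
  contDiffAt_div_sqrt (contDiffAt_pdx hU one_add_one_eq_two.le) (contDiffAt_pdy_div hU hx)

lemma contDiffAt_angularFlux (hU : ContDiffAt ℝ 2 U x) (hx : x.1 ≠ 0) :
    ContDiffAt ℝ 1 (angularFlux U) x := by
  unfold angularFlux polarW
  simp_rw [add_right_comm (1 : ℝ) (pdx U _ ^ 2)]
  exact contDiffAt_div_sqrt (contDiffAt_pdy_div hU hx) (contDiffAt_pdx hU one_add_one_eq_two.le)

lemma continuousAt_polarDiv (hU : ContDiffAt ℝ 2 U x) (hx : x.1 ≠ 0) :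
    ContinuousAt (polarDiv U) x :=
  (contDiffAt_pdx (contDiffAt_fst.mul (contDiffAt_radialFlux hU hx))
    (zero_add 1).le).continuousAt.add
      (contDiffAt_pdy (contDiffAt_angularFlux hU hx) (zero_add 1).le).continuousAt

lemma pdx_mul_radialFlux (hU : ContDiffAt ℝ 2 U x) (hx : x.1 ≠ 0) :
    pdx (fun y => y.1 * radialFlux U y) x = radialFlux U x + x.1 * pdx (radialFlux U) x := by
  have hd := (contDiffAt_radialFlux hU hx).differentiableAt one_ne_zero
  refine pdx_eq_of_hasDerivAt (differentiableAt_fst.mul hd) ?_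
  exact ((hasDerivAt_id x.1).mul (hasDerivAt_slice_fst hd)).congr_deriv (by rw [one_mul, id])

lemma polarDiv_eq (hU : ContDiffAt ℝ 2 U x) (hx : x.1 ≠ 0) :
    polarDiv U x = (pdx U x * (1 + pdx U x ^ 2 + 2 * (pdy U x / x.1) ^ 2)
      + x.1 * (1 + (pdy U x / x.1) ^ 2) * pdx (pdx U) x
      - 2 * pdx U x * (pdy U x / x.1) * pdy (pdx U) x
      + (1 + pdx U x ^ 2) * pdy (pdy U) x / x.1) / polarW U x ^ 3 := by
  have hdx := (contDiffAt_pdx hU one_add_one_eq_two.le).differentiableAt one_ne_zero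
  have hdy := (contDiffAt_pdy hU one_add_one_eq_two.le).differentiableAt one_ne_zero
  have hq := (contDiffAt_pdy_div hU hx).differentiableAt one_ne_zero
  have hqx : pdx (fun y => pdy U y / y.1) x = pdy (pdx U) x / x.1 - pdy U x / x.1 ^ 2 := by
    refine pdx_eq_of_hasDerivAt hq
      (((hasDerivAt_slice_fst hdy).div (hasDerivAt_id x.1) hx).congr_deriv ?_)
    rw [pdy_pdx_comm hU, id]
    field_simp
  have hqy : pdy (fun y => pdy U y / y.1) x = pdy (pdy U) x / x.1 :=
    pdy_eq_of_hasDerivAt hq ((hasDerivAt_slice_snd hdy).div_const x.1)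
  have hradial := pdx_div_sqrt hdx hq
  have hangular := pdy_div_sqrt hdx hq
  rw [hqx] at hradial
  rw [hqy] at hangular
  have hW := polarW_pos U x
  have hWsq : polarW U x ^ 2 = 1 + pdx U x ^ 2 + (pdy U x / x.1) ^ 2 := sq_sqrt (by positivity)
  rw [polarDiv, pdx_mul_radialFlux hU hx]
  unfold radialFlux angularFlux polarW at *
  rw [hradial, hangular]
  set W := √(1 + pdx U x ^ 2 + (pdy U x / x.1) ^ 2)
  field_simp
  field_simp at hWsq
  linear_combination pdx U x * hWsq

end Regularity

section Polar

variable (z : ℝ × ℝ) (c : ℝ)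

lemma contDiff_polar {n : WithTop ℕ∞} : ContDiff ℝ n (polar z c) := by
  unfold polar
  fun_prop

lemma continuous_polar : Continuous (polar z c) := (contDiff_polar z c (n := 0)).continuous

lemma enorm2_polar_sub (x : ℝ × ℝ) : enorm2 (polar z c x - z) = |x.1| := by
  rw [enorm2, ← sqrt_sq_eq_abs]
  congr 1
  simp only [polar, Prod.fst_sub, Prod.snd_sub, add_sub_cancel_left]
  linear_combination x.1 ^ 2 * cos_sq_add_sin_sq (c + x.2)

lemma hasDerivAt_polar_fst (x : ℝ × ℝ) :
    HasDerivAt (fun s => polar z c (s, x.2)) (cos (c + x.2), sin (c + x.2)) x.1 := by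
  have h := hasDerivAt_id x.1
  simpa [polar] using ((h.mul_const (cos (c + x.2))).const_add z.1).prodMk
    ((h.mul_const (sin (c + x.2))).const_add z.2)

lemma hasDerivAt_polar_snd (x : ℝ × ℝ) :
    HasDerivAt (fun t => polar z c (x.1, t))
      (x.1 * -sin (c + x.2), x.1 * cos (c + x.2)) x.2 := by
  have h := (hasDerivAt_id x.2).const_add c
  simpa [polar] using ((h.cos.const_mul x.1).const_add z.1).prodMk
    ((h.sin.const_mul x.1).const_add z.2)

lemma fderiv_polar_apply (x w : ℝ × ℝ) : fderiv ℝ (polar z c) x w =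
    (w.1 * cos (c + x.2) - w.2 * (x.1 * sin (c + x.2)),
      w.1 * sin (c + x.2) + w.2 * (x.1 * cos (c + x.2))) := by
  have hd : DifferentiableAt ℝ (polar z c) x := (contDiff_polar z c).differentiable one_ne_zero x
  have hfst : fderiv ℝ (polar z c) x (1, 0) = _ := (hd.hasFDerivAt.comp_hasDerivAt x.1
    ((hasDerivAt_id x.1).prodMk (hasDerivAt_const x.1 x.2)) :).unique (hasDerivAt_polar_fst z c x)
  have hsnd : fderiv ℝ (polar z c) x (0, 1) = _ := (hd.hasFDerivAt.comp_hasDerivAt x.2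
    ((hasDerivAt_const x.2 x.1).prodMk (hasDerivAt_id x.2)) :).unique (hasDerivAt_polar_snd z c x)
  have hw : w = w.1 • ((1 : ℝ), (0 : ℝ)) + w.2 • ((0 : ℝ), (1 : ℝ)) := by ext <;> simp
  conv_lhs => rw [hw, map_add, map_smul, map_smul, hfst, hsnd]
  ext <;> simp [sub_eq_add_neg]

lemma map_polar_nhds {x : ℝ × ℝ} (hx : x.1 ≠ 0) : map (polar z c) (𝓝 x) = 𝓝 (polar z c x) := by
  refine ((contDiff_polar z c (n := 1)).contDiffAt.hasStrictFDerivAt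
    one_ne_zero).map_nhds_eq_of_surj (LinearMap.range_eq_top.2 fun p => ?_)
  refine ⟨(p.1 * cos (c + x.2) + p.2 * sin (c + x.2),
    (p.2 * cos (c + x.2) - p.1 * sin (c + x.2)) / x.1), ?_⟩
  rw [ContinuousLinearMap.coe_coe, fderiv_polar_apply]
  have h := cos_sq_add_sin_sq (c + x.2)
  ext
  · field_simp
    linear_combination p.1 * h
  · field_simp
    linear_combination p.2 * h

variable {z} in
lemma exists_polar_eq {R : ℝ} {P : ℝ × ℝ} (hP : enorm2 (P - z) = R) :
    ∃ c, polar z c (R, 0) = P := by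
  let ζ : ℂ := Complex.equivRealProdCLM.symm (P - z)
  have hR : ‖ζ‖ = R := (enorm2_eq_norm _).symm.trans hP
  refine ⟨ζ.arg, ?_⟩
  simp only [polar, add_zero, ← hR, Complex.norm_mul_cos_arg, Complex.norm_mul_sin_arg]
  ext <;> simp [ζ, Complex.equivRealProdCLM_symm_apply]

section Comp

variable {f : ℝ × ℝ → ℝ} {x : ℝ × ℝ}

lemma hasDerivAt_comp_polar_fst (hf : DifferentiableAt ℝ f (polar z c x)) :
    HasDerivAt (fun s => f (polar z c (s, x.2)))
      (cos (c + x.2) * pdx f (polar z c x) + sin (c + x.2) * pdy f (polar z c x)) x.1 :=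
  hasDerivAt_comp_eq (γ := fun s => polar z c (s, x.2)) hf (hasDerivAt_polar_fst z c x)

lemma hasDerivAt_comp_polar_snd (hf : DifferentiableAt ℝ f (polar z c x)) :
    HasDerivAt (fun t => f (polar z c (x.1, t)))
      (x.1 * (cos (c + x.2) * pdy f (polar z c x) - sin (c + x.2) * pdx f (polar z c x))) x.2 :=
  (hasDerivAt_comp_eq (γ := fun t => polar z c (x.1, t)) hf
    (hasDerivAt_polar_snd z c x)).congr_deriv (by ring)

lemma pdx_comp_polar (hf : DifferentiableAt ℝ f (polar z c x)) :
    pdx (f ∘ polar z c) x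
      = cos (c + x.2) * pdx f (polar z c x) + sin (c + x.2) * pdy f (polar z c x) :=
  pdx_eq_of_hasDerivAt (hf.comp x ((contDiff_polar z c).differentiable one_ne_zero x))
    (hasDerivAt_comp_polar_fst z c hf)

lemma pdy_comp_polar (hf : DifferentiableAt ℝ f (polar z c x)) :
    pdy (f ∘ polar z c) x
      = x.1 * (cos (c + x.2) * pdy f (polar z c x) - sin (c + x.2) * pdx f (polar z c x)) :=
  pdy_eq_of_hasDerivAt (hf.comp x ((contDiff_polar z c).differentiable one_ne_zero x))
    (hasDerivAt_comp_polar_snd z c hf)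

lemma polarW_comp_polar (hf : DifferentiableAt ℝ f (polar z c x)) (hx : x.1 ≠ 0) :
    polarW (f ∘ polar z c) x = Wgraph f (polar z c x) := by
  rw [polarW, Wgraph, pdx_comp_polar z c hf, pdy_comp_polar z c hf, mul_div_cancel_left₀ _ hx]
  congr 1
  linear_combination
    (pdx f (polar z c x) ^ 2 + pdy f (polar z c x) ^ 2) * cos_sq_add_sin_sq (c + x.2)

lemma radialFlux_comp_polar (hf : DifferentiableAt ℝ f (polar z c x)) (hx : x.1 ≠ 0) :
    radialFlux (f ∘ polar z c) x = -(cos (c + x.2) * (normalVec f (polar z c x)).1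
      + sin (c + x.2) * (normalVec f (polar z c x)).2.1) := by
  rw [radialFlux, polarW_comp_polar z c hf hx, pdx_comp_polar z c hf, normalVec]
  ring

lemma angularFlux_comp_polar (hf : DifferentiableAt ℝ f (polar z c x)) (hx : x.1 ≠ 0) :
    angularFlux (f ∘ polar z c) x = sin (c + x.2) * (normalVec f (polar z c x)).1
      - cos (c + x.2) * (normalVec f (polar z c x)).2.1 := by
  rw [angularFlux, polarW_comp_polar z c hf hx, pdy_comp_polar z c hf, normalVec,
    mul_div_cancel_left₀ _ hx]
  ring

lemma eventually_differentiableAt_polar (hf : ContDiffAt ℝ 2 f (polar z c x)) :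
    ∀ᶠ y in 𝓝 x, DifferentiableAt ℝ f (polar z c y) :=
  ((continuous_polar z c).continuousAt.eventually
    (hf.eventually (by simp))).mono fun _ hy => hy.differentiableAt two_ne_zero

lemma polarDiv_comp_polar (hf : ContDiffAt ℝ 2 f (polar z c x)) (hx : x.1 ≠ 0) :
    polarDiv (f ∘ polar z c) x = -(x.1 * (pdx (fun q => (normalVec f q).1) (polar z c x)
      + pdy (fun q => (normalVec f q).2.1) (polar z c x))) := by
  have hcomp := hf.comp x (contDiff_polar z c).contDiffAt
  have hN₁ := (contDiffAt_normalVec_fst hf).differentiableAt one_ne_zero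
  have hN₂ := (contDiffAt_normalVec_snd hf).differentiableAt one_ne_zero
  have hα := (hasDerivAt_id x.2).const_add c
  have hnear := (eventually_differentiableAt_polar z c hf).and (continuousAt_fst.eventually_ne hx)
  have hradial : HasDerivAt (fun s => radialFlux (f ∘ polar z c) (s, x.2)) _ x.1 :=
    ((((hasDerivAt_comp_polar_fst z c hN₁).const_mul (cos (c + x.2))).add
      ((hasDerivAt_comp_polar_fst z c hN₂).const_mul
        (sin (c + x.2)))).neg).congr_of_eventuallyEq <|
      ((Continuous.prodMk_left x.2).continuousAt.eventually hnear).mono fun s hs =>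
        radialFlux_comp_polar z c hs.1 hs.2
  have hangular : HasDerivAt (fun t => angularFlux (f ∘ polar z c) (x.1, t)) _ x.2 :=
    ((hα.sin.mul (hasDerivAt_comp_polar_snd z c hN₁)).sub
      (hα.cos.mul (hasDerivAt_comp_polar_snd z c hN₂))).congr_of_eventuallyEq <|
      ((Continuous.prodMk_right x.1).continuousAt.eventually hnear).mono fun t ht =>
        angularFlux_comp_polar z c ht.1 ht.2
  rw [polarDiv, pdx_mul_radialFlux hcomp hx,
    pdx_eq_of_hasDerivAt ((contDiffAt_radialFlux hcomp hx).differentiableAt one_ne_zero) hradial,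
    pdy_eq_of_hasDerivAt ((contDiffAt_angularFlux hcomp hx).differentiableAt one_ne_zero) hangular,
    radialFlux_comp_polar z c (hf.differentiableAt two_ne_zero) hx]
  simp only [id, Prod.mk.eta]
  set N₁x := pdx (fun q => (normalVec f q).1) (polar z c x)
  set N₂y := pdy (fun q => (normalVec f q).2.1) (polar z c x)
  linear_combination (-x.1 * (N₁x + N₂y)) * cos_sq_add_sin_sq (c + x.2)

end Comp

lemma IsCMCSolution.polarDiv_comp_polar {H : ℝ} {Ω : Set (ℝ × ℝ)} {u : ℝ × ℝ → ℝ}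
    (hu : IsCMCSolution H Ω u) (hΩ : IsOpen Ω) {x : ℝ × ℝ} (hxΩ : polar z c x ∈ Ω)
    (hx : x.1 ≠ 0) : polarDiv (u ∘ polar z c) x = 2 * H * x.1 := by
  rw [_root_.polarDiv_comp_polar z c (hu.contDiffAt hΩ hxΩ) hx, hu.div_normalVec hΩ hxΩ]
  ring

end Polar

/-! ### The barrier -/

/-- Half the opening angle of the sectors carrying the barriers of parameters `R` and `l`. -/
def halfAngle (R l : ℝ) : ℝ := 2 * π * l / R

/-- The angles of the sector over which the barrier is used. -/
abbrev sectorAngles (R l : ℝ) : Set ℝ := Icc (-halfAngle R l) (halfAngle R l)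

/-- The barrier in polar coordinates `x = (s, θ)`, to be used where `0 < s - R + η` and
`|θ| < halfAngle R l`: it is infinite on the sides `|θ| = halfAngle R l`, and as `η → 0` it goes
to `-∞` on the arc `s = R`. -/
def barrier (R l η K : ℝ) (x : ℝ × ℝ) : ℝ :=
  l * log (x.1 - R + η) - 4 * l * log (cos (R / (4 * l) * x.2)) + K

lemma mul_halfAngle {R l : ℝ} (hR : R ≠ 0) (hl : l ≠ 0) : R / (4 * l) * halfAngle R l = π / 2 := by
  unfold halfAngle
  field_simp
  norm_num

lemma halfAngle_pos {R l : ℝ} (hR : 0 < R) (hl : 0 < l) : 0 < halfAngle R l := by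
  unfold halfAngle
  positivity

lemma cos_pos_of_abs_lt_halfAngle {R l t : ℝ} (hR : 0 < R) (hl : 0 < l)
    (ht : |t| < halfAngle R l) : 0 < cos (R / (4 * l) * t) := by
  have h : |R / (4 * l) * t| < π / 2 := by
    rw [← mul_halfAngle hR.ne' hl.ne', abs_mul, abs_of_pos (by positivity : 0 < R / (4 * l))]
    gcongr
  exact cos_pos_of_mem_Ioo ⟨(abs_lt.1 h).1, (abs_lt.1 h).2⟩

section

variable {R l η K : ℝ} {x : ℝ × ℝ}

lemma le_barrier {r : ℝ} (hl : 0 ≤ l) (hr : 0 < r) (hx : r ≤ x.1 - R + η) :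
    l * log r + K ≤ barrier R l η K x := by
  have hlog : log r ≤ log (x.1 - R + η) := log_le_log hr hx
  have hcos : log (cos (R / (4 * l) * x.2)) ≤ 0 :=
    (log_abs _).symm.trans_le (log_nonpos (abs_nonneg _) (abs_cos_le_one _))
  unfold barrier
  nlinarith

lemma contDiffAt_barrier {n : WithTop ℕ∞} (hs : x.1 - R + η ≠ 0)
    (hc : cos (R / (4 * l) * x.2) ≠ 0) : ContDiffAt ℝ n (barrier R l η K) x := by
  unfold barrier
  fun_prop (disch := assumption)

lemma pdx_barrier (hs : x.1 - R + η ≠ 0) (hc : cos (R / (4 * l) * x.2) ≠ 0) :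
    pdx (barrier R l η K) x = l / (x.1 - R + η) := by
  refine pdx_eq_of_hasDerivAt ((contDiffAt_barrier hs hc).differentiableAt one_ne_zero) ?_
  have h := ((((hasDerivAt_id x.1).sub_const R).add_const η).log hs).const_mul l
  simpa [barrier, div_eq_mul_inv] using
    (h.sub_const (4 * l * log (cos (R / (4 * l) * x.2)))).add_const K

lemma pdy_barrier (hl : l ≠ 0) (hs : x.1 - R + η ≠ 0) (hc : cos (R / (4 * l) * x.2) ≠ 0) :
    pdy (barrier R l η K) x = R * tan (R / (4 * l) * x.2) := by
  refine pdy_eq_of_hasDerivAt ((contDiffAt_barrier hs hc).differentiableAt one_ne_zero) ?_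
  have h := (((hasDerivAt_id x.2).const_mul (R / (4 * l))).cos.log hc).const_mul (4 * l)
  refine ((h.const_sub (l * log (x.1 - R + η))).add_const K).congr_deriv ?_
  rw [tan_eq_sin_div_cos, id]
  field_simp

lemma eventually_barrier_regular (hs : x.1 - R + η ≠ 0) (hc : cos (R / (4 * l) * x.2) ≠ 0) :
    ∀ᶠ y : ℝ × ℝ in 𝓝 x, y.1 - R + η ≠ 0 ∧ cos (R / (4 * l) * y.2) ≠ 0 :=
  ((by fun_prop : ContinuousAt (fun y : ℝ × ℝ => y.1 - R + η) x).eventually_ne hs).and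
    ((by fun_prop : ContinuousAt (fun y : ℝ × ℝ => cos (R / (4 * l) * y.2)) x).eventually_ne hc)

lemma pdx_congr {f g : ℝ × ℝ → ℝ} (h : f =ᶠ[𝓝 x] g) : pdx f x = pdx g x := by
  rw [pdx, h.fderiv_eq, pdx]

lemma pdy_congr {f g : ℝ × ℝ → ℝ} (h : f =ᶠ[𝓝 x] g) : pdy f x = pdy g x := by
  rw [pdy, h.fderiv_eq, pdy]

lemma pdx_pdx_barrier (hs : x.1 - R + η ≠ 0) (hc : cos (R / (4 * l) * x.2) ≠ 0) :
    pdx (pdx (barrier R l η K)) x = -(pdx (barrier R l η K) x ^ 2 / l) := by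
  rw [pdx_barrier hs hc,
    pdx_congr ((eventually_barrier_regular hs hc).mono fun y hy => pdx_barrier hy.1 hy.2)]
  refine pdx_eq_of_hasDerivAt (by fun_prop (disch := assumption)) ?_
  refine ((hasDerivAt_const x.1 l).div
    (((hasDerivAt_id x.1).sub_const R).add_const η) hs).congr_deriv ?_
  rw [id]
  field_simp
  ring

lemma pdy_pdx_barrier (hs : x.1 - R + η ≠ 0) (hc : cos (R / (4 * l) * x.2) ≠ 0) :
    pdy (pdx (barrier R l η K)) x = 0 := by
  rw [pdy_congr ((eventually_barrier_regular hs hc).mono fun y hy => pdx_barrier hy.1 hy.2)]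
  exact pdy_eq_of_hasDerivAt (by fun_prop (disch := assumption))
    (hasDerivAt_const x.2 (l / (x.1 - R + η)))

lemma pdy_pdy_barrier (hl : l ≠ 0) (hs : x.1 - R + η ≠ 0) (hc : cos (R / (4 * l) * x.2) ≠ 0) :
    pdy (pdy (barrier R l η K)) x
      = (R ^ 2 + pdy (barrier R l η K) x ^ 2) / (4 * l) := by
  rw [pdy_barrier hl hs hc,
    pdy_congr ((eventually_barrier_regular hs hc).mono fun y hy => pdy_barrier hl hy.1 hy.2)]
  have htan : DifferentiableAt ℝ tan (R / (4 * l) * x.2) := differentiableAt_tan.2 hc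
  refine pdy_eq_of_hasDerivAt (by fun_prop) ?_
  refine (((hasDerivAt_tan hc).comp x.2
    ((hasDerivAt_id x.2).const_mul (R / (4 * l)))).const_mul R).congr_deriv ?_
  rw [mul_pow, ← mul_one_add, ← inv_inv (1 + tan _ ^ 2), inv_one_add_tan_sq hc]
  field_simp

end

/-- `p` and `q` are the radial and the angular slope of the barrier at distance `s` from the centre
of the circle. -/
lemma barrier_curvature_lt {R l s p q : ℝ} (hl : 0 < l) (hlR : 2 * l ≤ R) (hs : R ≤ s)
    (hp : 1 ≤ p) :
    p * (1 + p ^ 2 + 2 * q ^ 2) + s * (1 + q ^ 2) * -(p ^ 2 / l)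
      + (1 + p ^ 2) * ((R ^ 2 + (s * q) ^ 2) / (4 * l)) / s
      < s / R * √(1 + p ^ 2 + q ^ 2) ^ 3 := by
  have hR : 0 < R := by linarith
  have hs0 : 0 < s := by linarith
  have hsq : √(1 + p ^ 2 + q ^ 2) ^ 2 = 1 + p ^ 2 + q ^ 2 := sq_sqrt (by positivity)
  have hpW : p ≤ √(1 + p ^ 2 + q ^ 2) := le_sqrt_of_sq_le (by nlinarith)
  set W := √(1 + p ^ 2 + q ^ 2)
  have hcubic : p * (1 + p ^ 2 + q ^ 2) ≤ s / R * W ^ 3 := calc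
    p * (1 + p ^ 2 + q ^ 2) ≤ W * W ^ 2 := by rw [hsq]; gcongr
    _ = W ^ 3 := by ring
    _ ≤ s / R * W ^ 3 := le_mul_of_one_le_left (by positivity) ((one_le_div hR).2 hs)
  have hangular : (1 + p ^ 2) * ((R ^ 2 + (s * q) ^ 2) / (4 * l)) / s
      ≤ s / (4 * l) * ((1 + p ^ 2) * (1 + q ^ 2)) := calc
    _ ≤ (1 + p ^ 2) * ((s ^ 2 + (s * q) ^ 2) / (4 * l)) / s := by gcongr
    _ = s / (4 * l) * ((1 + p ^ 2) * (1 + q ^ 2)) := by field_simp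
  have hradial : s * (1 + q ^ 2) * -(p ^ 2 / l)
      ≤ -(2 * (s / (4 * l))) * ((1 + p ^ 2) * (1 + q ^ 2)) := calc
    _ = -(2 * (s / (4 * l))) * ((2 * p ^ 2) * (1 + q ^ 2)) := by field_simp; norm_num
    _ ≤ _ := mul_le_mul_of_nonpos_left (by gcongr; nlinarith)
        (neg_nonpos.2 (by positivity))
  have hcoef : 1 / 2 ≤ s / (4 * l) := by
    rw [le_div_iff₀ (by positivity)]
    linarith
  have hsurplus :
      1 / 2 * ((1 + p ^ 2) * (1 + q ^ 2)) ≤ s / (4 * l) * ((1 + p ^ 2) * (1 + q ^ 2)) := by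
    gcongr
  have habsorb : p * q ^ 2 < 1 / 2 * ((1 + p ^ 2) * (1 + q ^ 2)) := by
    nlinarith [mul_nonneg (sq_nonneg (p - 1)) (sq_nonneg q), sq_nonneg p]
  linarith

lemma polarDiv_barrier_lt {R l η K : ℝ} {x : ℝ × ℝ} (hl : 0 < l) (hlR : 2 * l ≤ R)
    (hx : R ≤ x.1) (hs : 0 < x.1 - R + η) (hsl : x.1 - R + η ≤ l)
    (hc : cos (R / (4 * l) * x.2) ≠ 0) : polarDiv (barrier R l η K) x < x.1 / R := by
  have hx0 : 0 < x.1 := by linarith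
  have hp : 1 ≤ pdx (barrier R l η K) x := by
    rw [pdx_barrier hs.ne' hc]
    exact (one_le_div hs).2 hsl
  have h := barrier_curvature_lt (q := pdy (barrier R l η K) x / x.1) hl hlR hx hp
  rw [mul_div_cancel₀ _ hx0.ne'] at h
  rwa [polarDiv_eq (contDiffAt_barrier hs.ne' hc) hx0.ne',
    div_lt_iff₀ (pow_pos (polarW_pos _ _) 3), pdx_pdx_barrier hs.ne' hc,
    pdy_pdx_barrier hs.ne' hc, pdy_pdy_barrier hl.ne' hs.ne' hc, mul_zero, sub_zero, polarW]

/-! ### Comparison by the divergence theorem -/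

lemma continuousOn_slice_snd {h : ℝ × ℝ → ℝ} {s : ℝ} {I : Set ℝ}
    (hh : ∀ t ∈ I, ContinuousAt h (s, t)) : ContinuousOn (fun t => h (s, t)) I := fun t ht =>
  ((hh t ht).comp (Continuous.prodMk_right s).continuousAt).continuousWithinAt

section DivergenceTheorem

variable {a b : ℝ × ℝ}

lemma continuousOn_pdx {f : ℝ × ℝ → ℝ} {s : Set (ℝ × ℝ)} (hf : ∀ x ∈ s, ContDiffAt ℝ 1 f x) :
    ContinuousOn (pdx f) s := fun x hx =>
  (contDiffAt_pdx (hf x hx) (zero_add 1).le).continuousAt.continuousWithinAt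

lemma continuousOn_pdy {f : ℝ × ℝ → ℝ} {s : Set (ℝ × ℝ)} (hf : ∀ x ∈ s, ContDiffAt ℝ 1 f x) :
    ContinuousOn (pdy f) s := fun x hx =>
  (contDiffAt_pdy (hf x hx) (zero_add 1).le).continuousAt.continuousWithinAt

lemma integral_div_eq_neg_integral {f g : ℝ × ℝ → ℝ} (hab : a ≤ b)
    (hf : ∀ x ∈ Icc a b, ContDiffAt ℝ 1 f x) (hg : ∀ x ∈ Icc a b, ContDiffAt ℝ 1 g x)
    (hright : ∀ t ∈ Icc a.2 b.2, f (b.1, t) = 0) (htop : ∀ s ∈ Icc a.1 b.1, g (s, b.2) = 0)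
    (hbottom : ∀ s ∈ Icc a.1 b.1, g (s, a.2) = 0) :
    ∫ x in Icc a b, (pdx f x + pdy g x) = -∫ t in a.2..b.2, f (a.1, t) := by
  have hderiv {h : ℝ × ℝ → ℝ} (hh : ∀ x ∈ Icc a b, ContDiffAt ℝ 1 h x) :
      ∀ x ∈ Ioo a.1 b.1 ×ˢ Ioo a.2 b.2, HasFDerivAt h (fderiv ℝ h x) x := fun x hx =>
    ((hh x (Icc_prod_eq a b ▸ prod_mono Ioo_subset_Icc_self Ioo_subset_Icc_self
      hx)).differentiableAt one_ne_zero).hasFDerivAt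
  have hdiv := integral_divergence_prod_Icc_of_hasFDerivAt_of_le f g (fderiv ℝ f) (fderiv ℝ g)
    a b hab (fun x hx => (hf x hx).continuousAt.continuousWithinAt)
    (fun x hx => (hg x hx).continuousAt.continuousWithinAt) (hderiv hf) (hderiv hg)
    (((continuousOn_pdx hf).add (continuousOn_pdy hg)).integrableOn_compact isCompact_Icc)
  have hzero {c d : ℝ} {h : ℝ → ℝ} (hcd : c ≤ d) (hh : ∀ t ∈ Icc c d, h t = 0) :
      ∫ t in c..d, h t = 0 := by
    rw [intervalIntegral.integral_congr (g := 0) fun t ht => hh t (uIcc_of_le hcd ▸ ht)]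
    exact intervalIntegral.integral_zero
  rwa [hzero hab.1 htop, hzero hab.1 hbottom, hzero hab.2 hright, sub_zero, add_zero,
    zero_sub] at hdiv

lemma integral_comp_mul_div_le {T : ℝ → ℝ} (hT : ContDiff ℝ 1 T) (hTmono : Monotone T)
    (hTzero : ∀ t ≤ 0, T t = 0) {E F G : ℝ × ℝ → ℝ} (hab : a ≤ b)
    (hE : ∀ x ∈ Icc a b, ContDiffAt ℝ 1 E x) (hF : ∀ x ∈ Icc a b, ContDiffAt ℝ 1 F x)
    (hG : ∀ x ∈ Icc a b, ContDiffAt ℝ 1 G x)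
    (hEFG : ∀ x ∈ Icc a b, 0 ≤ pdx E x * F x + pdy E x * G x)
    (hright : ∀ t ∈ Icc a.2 b.2, E (b.1, t) ≤ 0) (htop : ∀ s ∈ Icc a.1 b.1, E (s, b.2) ≤ 0)
    (hbottom : ∀ s ∈ Icc a.1 b.1, E (s, a.2) ≤ 0) :
    ∫ x in Icc a b, T (E x) * (pdx F x + pdy G x)
      ≤ -∫ t in a.2..b.2, T (E (a.1, t)) * F (a.1, t) := by
  have hTE : ∀ x ∈ Icc a b, ContDiffAt ℝ 1 (fun y => T (E y)) x := fun x hx =>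
    hT.contDiffAt.comp x (hE x hx)
  have hfderiv {h : ℝ × ℝ → ℝ} {x : ℝ × ℝ} (hx : x ∈ Icc a b) (hh : ContDiffAt ℝ 1 h x) :
      fderiv ℝ (fun y => T (E y) * h y) x
        = T (E x) • fderiv ℝ h x + h x • (deriv T (E x) • fderiv ℝ E x) :=
    (((hT.differentiable one_ne_zero (E x)).hasDerivAt.comp_hasFDerivAt x
      ((hE x hx).differentiableAt one_ne_zero).hasFDerivAt).mul
      (hh.differentiableAt one_ne_zero).hasFDerivAt).fderiv
  have hTF : ∀ x ∈ Icc a b, ContDiffAt ℝ 1 (fun y => T (E y) * F y) x := fun x hx =>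
    (hTE x hx).mul (hF x hx)
  have hTG : ∀ x ∈ Icc a b, ContDiffAt ℝ 1 (fun y => T (E y) * G y) x := fun x hx =>
    (hTE x hx).mul (hG x hx)
  rw [← integral_div_eq_neg_integral hab hTF hTG
    (fun t ht => by rw [hTzero _ (hright t ht), zero_mul])
    (fun s hs => by rw [hTzero _ (htop s hs), zero_mul])
    (fun s hs => by rw [hTzero _ (hbottom s hs), zero_mul])]
  have hTE_cont : ContinuousOn (fun y => T (E y)) (Icc a b) := fun x hx =>
    (hTE x hx).continuousAt.continuousWithinAt
  refine setIntegral_mono_on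
    ((hTE_cont.mul ((continuousOn_pdx hF).add
      (continuousOn_pdy hG))).integrableOn_compact isCompact_Icc)
    (((continuousOn_pdx hTF).add (continuousOn_pdy hTG)).integrableOn_compact isCompact_Icc)
    measurableSet_Icc fun x hx => ?_
  have hTF' : pdx (fun y => T (E y) * F y) x
      = T (E x) * pdx F x + F x * (deriv T (E x) * pdx E x) := by
    rw [pdx, hfderiv hx (hF x hx)]
    rfl
  have hTG' : pdy (fun y => T (E y) * G y) x
      = T (E x) * pdy G x + G x * (deriv T (E x) * pdy E x) := by
    rw [pdy, hfderiv hx (hG x hx)]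
    rfl
  rw [hTF', hTG']
  linear_combination mul_nonneg hTmono.deriv_nonneg (hEFG x hx)

end DivergenceTheorem

section Comparison

variable {U V : ℝ × ℝ → ℝ} {x a b : ℝ × ℝ}

lemma pdx_sub (hU : DifferentiableAt ℝ U x) (hV : DifferentiableAt ℝ V x) :
    pdx (fun y => U y - V y) x = pdx U x - pdx V x := by
  rw [pdx, fderiv_fun_sub hU hV]
  rfl

lemma pdy_sub (hU : DifferentiableAt ℝ U x) (hV : DifferentiableAt ℝ V x) :
    pdy (fun y => U y - V y) x = pdy U x - pdy V x := by
  rw [pdy, fderiv_fun_sub hU hV]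
  rfl

lemma polarDiv_sub_polarDiv (hU : ContDiffAt ℝ 2 U x) (hV : ContDiffAt ℝ 2 V x) (hx : x.1 ≠ 0) :
    pdx (fun y => y.1 * (radialFlux U y - radialFlux V y)) x
      + pdy (fun y => angularFlux U y - angularFlux V y) x = polarDiv U x - polarDiv V x := by
  have hradial {U : ℝ × ℝ → ℝ} (hU : ContDiffAt ℝ 2 U x) :
      DifferentiableAt ℝ (fun y => y.1 * radialFlux U y) x :=
    differentiableAt_fst.mul ((contDiffAt_radialFlux hU hx).differentiableAt one_ne_zero)
  simp_rw [mul_sub]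
  rw [pdx_sub (hradial hU) (hradial hV),
    pdy_sub ((contDiffAt_angularFlux hU hx).differentiableAt one_ne_zero)
      ((contDiffAt_angularFlux hV hx).differentiableAt one_ne_zero), polarDiv, polarDiv]
  ring

lemma pdx_mul_flux_sub_nonneg (hx : 0 < x.1) :
    0 ≤ (pdx U x - pdx V x) * (x.1 * (radialFlux U x - radialFlux V x))
      + (pdy U x - pdy V x) * (angularFlux U x - angularFlux V x) := by
  have h := sub_mul_div_sqrt_add_nonneg (pdx U x) (pdy U x / x.1) (pdx V x) (pdy V x / x.1)
  refine (mul_nonneg hx.le h).trans_eq ?_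
  simp only [radialFlux, angularFlux, polarW]
  field_simp

lemma one_sub_radialFlux_nonneg (U : ℝ × ℝ → ℝ) (x : ℝ × ℝ) : 0 ≤ 1 - radialFlux U x :=
  sub_nonneg.2 (abs_le.1 (abs_radialFlux_le_one U x)).2

lemma mul_radialFlux_sub_le {τ : ℝ} (hτ : 0 ≤ τ) (hx : 0 ≤ x.1) :
    -(τ * (x.1 * (radialFlux U x - radialFlux V x))) ≤ x.1 * (τ * (1 - radialFlux U x)) := by
  linear_combination mul_nonneg (mul_nonneg hx hτ)
    (one_sub_radialFlux_nonneg V x)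

lemma integral_comp_sub_mul_polarDiv_sub_le {T : ℝ → ℝ} (hT : ContDiff ℝ 1 T)
    (hTmono : Monotone T) (hTzero : ∀ t ≤ 0, T t = 0) (hab : a ≤ b) (ha : 0 < a.1)
    (hU : ∀ x ∈ Icc a b, ContDiffAt ℝ 2 U x) (hV : ∀ x ∈ Icc a b, ContDiffAt ℝ 2 V x)
    (hright : ∀ t ∈ Icc a.2 b.2, U (b.1, t) ≤ V (b.1, t))
    (htop : ∀ s ∈ Icc a.1 b.1, U (s, b.2) ≤ V (s, b.2))
    (hbottom : ∀ s ∈ Icc a.1 b.1, U (s, a.2) ≤ V (s, a.2)) :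
    ∫ x in Icc a b, T (U x - V x) * (polarDiv U x - polarDiv V x)
      ≤ a.1 * ∫ t in a.2..b.2, T (U (a.1, t) - V (a.1, t)) * (1 - radialFlux U (a.1, t)) := by
  have hpos : ∀ x ∈ Icc a b, 0 < x.1 := fun x hx => ha.trans_le hx.1.1
  have hE : ∀ x ∈ Icc a b, ContDiffAt ℝ 1 (fun y => U y - V y) x := fun x hx =>
    ((hU x hx).sub (hV x hx)).of_le one_le_two
  have hF : ∀ x ∈ Icc a b,
      ContDiffAt ℝ 1 (fun y => y.1 * (radialFlux U y - radialFlux V y)) x := fun x hx =>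
    contDiffAt_fst.mul ((contDiffAt_radialFlux (hU x hx) (hpos x hx).ne').sub
      (contDiffAt_radialFlux (hV x hx) (hpos x hx).ne'))
  have hdiv := integral_comp_mul_div_le hT hTmono hTzero hab hE hF
    (fun x hx => (contDiffAt_angularFlux (hU x hx) (hpos x hx).ne').sub
      (contDiffAt_angularFlux (hV x hx) (hpos x hx).ne'))
    (fun x hx => by
      rw [pdx_sub ((hU x hx).differentiableAt two_ne_zero) ((hV x hx).differentiableAt two_ne_zero),
        pdy_sub ((hU x hx).differentiableAt two_ne_zero) ((hV x hx).differentiableAt two_ne_zero)]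
      exact pdx_mul_flux_sub_nonneg (hpos x hx))
    (fun t ht => sub_nonpos.2 (hright t ht)) (fun s hs => sub_nonpos.2 (htop s hs))
    (fun s hs => sub_nonpos.2 (hbottom s hs))
  rw [setIntegral_congr_fun measurableSet_Icc fun x hx => congrArg (T (U x - V x) * ·)
    (polarDiv_sub_polarDiv (hU x hx) (hV x hx) (hpos x hx).ne').symm]
  refine hdiv.trans ?_
  have hside {h : ℝ × ℝ → ℝ} (hh : ∀ x ∈ Icc a b, ContDiffAt ℝ 1 h x) :
      ContinuousOn (fun t => h (a.1, t)) (Icc a.2 b.2) :=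
    continuousOn_slice_snd fun t ht => (hh (a.1, t) ⟨⟨le_rfl, ht.1⟩, ⟨hab.1, ht.2⟩⟩).continuousAt
  have hTE := hT.continuous.comp_continuousOn (hside hE)
  have hflux := hside fun x hx => contDiffAt_radialFlux (hU x hx) (hpos x hx).ne'
  rw [← intervalIntegral.integral_neg, ← intervalIntegral.integral_const_mul]
  refine intervalIntegral.integral_mono_on hab.2
    ((hTE.mul (hside hF)).neg.intervalIntegrable_of_Icc hab.2)
    ((continuousOn_const.mul
      (hTE.mul (continuousOn_const.sub hflux))).intervalIntegrable_of_Icc hab.2)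
    fun t _ => mul_radialFlux_sub_le ?_ ha.le
  exact (hTzero _ (min_le_right _ 0)).symm.trans_le (hTmono (min_le_left _ 0))

end Comparison

/-! ### The excess over the barrier -/

/-- The region, in polar coordinates, where the barrier is regular and has mean curvature less
than `1 / (2 * R)`. -/
def barrierDomain (R l η : ℝ) : Set (ℝ × ℝ) :=
  {x | R ≤ x.1 ∧ 0 < x.1 - R + η ∧ x.1 - R + η ≤ l ∧ |x.2| < halfAngle R l}

/-- The cutoff of the excess of `U` over the barrier, times the amount by which `polarDiv` of the
barrier falls short of the value `x.1 / R` taken on solutions of mean curvature `1 / (2 * R)`. -/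
def weightedDefect (R l η K : ℝ) (U : ℝ × ℝ → ℝ) (x : ℝ × ℝ) : ℝ :=
  smoothTransition (U x - barrier R l η K x) * (x.1 / R - polarDiv (barrier R l η K) x)

section WeightedDefect

variable {R l η K a β : ℝ} {U : ℝ × ℝ → ℝ} {x : ℝ × ℝ} {s : Set (ℝ × ℝ)}

lemma barrier_neg (t θ : ℝ) : barrier R l η K (t, -θ) = barrier R l η K (t, θ) := by
  simp only [barrier, mul_neg, cos_neg]

lemma barrier_mono_fst {t t' : ℝ} (hl : 0 ≤ l) (ht : 0 < t - R + η) (htt' : t ≤ t') (θ : ℝ) :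
    barrier R l η K (t, θ) ≤ barrier R l η K (t', θ) := by
  unfold barrier
  gcongr

lemma tendsto_barrier_halfAngle (hR : 0 < R) (hl : 0 < l) (t : ℝ) :
    Tendsto (fun θ => barrier R l η K (t, θ)) (𝓝[<] halfAngle R l) atTop := by
  have hlim : Tendsto (fun θ => R / (4 * l) * θ) (𝓝[<] halfAngle R l) (𝓝[<] (π / 2)) := by
    rw [← mul_halfAngle hR.ne' hl.ne']
    exact (continuous_const_mul _).continuousWithinAt.tendsto_nhdsWithin
      fun θ (hθ : θ < _) => mul_lt_mul_of_pos_left hθ (by positivity)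
  have hlog := tendsto_log_nhdsGT_zero.comp (tendsto_cos_pi_div_two.comp hlim)
  unfold barrier
  simp only [sub_eq_add_neg, ← neg_mul]
  exact tendsto_atTop_add_const_right _ K (tendsto_atTop_add_const_left _ _
    (hlog.const_mul_atBot_of_neg (by linarith)))

lemma exists_lateral_le_barrier (hR : 0 < R) (hl : 0 < l) {t M : ℝ} (ht : 0 < t - R + η)
    (hβ : β < halfAngle R l) : ∃ β' ∈ Ioo β (halfAngle R l), ∀ t' ≥ t,
      M ≤ barrier R l η K (t', β') ∧ M ≤ barrier R l η K (t', -β') := by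
  obtain ⟨β', hM, hβ'⟩ := (((tendsto_barrier_halfAngle hR hl t).eventually_ge_atTop M).and
    (Ioo_mem_nhdsLT hβ)).exists
  refine ⟨β', hβ', fun t' ht' => ?_⟩
  rw [barrier_neg, and_self]
  exact hM.trans (barrier_mono_fst hl.le ht ht' β')

lemma contDiffAt_barrier_of_mem {n : WithTop ℕ∞} (hR : 0 < R) (hl : 0 < l)
    (hx : x ∈ barrierDomain R l η) : ContDiffAt ℝ n (barrier R l η K) x :=
  contDiffAt_barrier hx.2.1.ne' (cos_pos_of_abs_lt_halfAngle hR hl hx.2.2.2).ne'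

lemma polarDiv_barrier_lt_of_mem (hl : 0 < l) (hlR : 2 * l ≤ R) (hx : x ∈ barrierDomain R l η) :
    polarDiv (barrier R l η K) x < x.1 / R :=
  polarDiv_barrier_lt hl hlR hx.1 hx.2.1 hx.2.2.1
    (cos_pos_of_abs_lt_halfAngle (by linarith) hl hx.2.2.2).ne'

lemma continuousOn_defect (hR : 0 < R) (hl : 0 < l) :
    ContinuousOn (fun x => x.1 / R - polarDiv (barrier R l η K) x) (barrierDomain R l η) :=
  fun _ hx => ((continuousAt_fst.div_const R).sub (continuousAt_polarDiv
    (contDiffAt_barrier_of_mem hR hl hx) (hR.trans_le hx.1).ne')).continuousWithinAt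

lemma continuousOn_smoothTransition_sub_barrier (hR : 0 < R) (hl : 0 < l)
    (hs : s ⊆ barrierDomain R l η) (hU : ContinuousOn U s) :
    ContinuousOn (fun x => smoothTransition (U x - barrier R l η K x)) s :=
  smoothTransition.continuous.comp_continuousOn (hU.sub fun _ hx =>
    (contDiffAt_barrier_of_mem (n := 0) hR hl (hs hx)).continuousAt.continuousWithinAt)

lemma continuousOn_weightedDefect (hR : 0 < R) (hl : 0 < l) (hs : s ⊆ barrierDomain R l η)
    (hU : ContinuousOn U s) : ContinuousOn (weightedDefect R l η K U) s :=
  (continuousOn_smoothTransition_sub_barrier hR hl hs hU).mul ((continuousOn_defect hR hl).mono hs)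

lemma weightedDefect_nonneg (hl : 0 < l) (hlR : 2 * l ≤ R) (hx : x ∈ barrierDomain R l η) :
    0 ≤ weightedDefect R l η K U x :=
  mul_nonneg (smoothTransition.nonneg _) (sub_pos.2 (polarDiv_barrier_lt_of_mem hl hlR hx)).le

lemma weightedDefect_le (hl : 0 < l) (hlR : 2 * l ≤ R) (hx : x ∈ barrierDomain R l η) :
    weightedDefect R l η K U x ≤ x.1 / R - polarDiv (barrier R l η K) x :=
  mul_le_of_le_one_left (sub_pos.2 (polarDiv_barrier_lt_of_mem hl hlR hx)).le
    (smoothTransition.le_one _)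

lemma le_barrier_of_weightedDefect_eq_zero (hl : 0 < l) (hlR : 2 * l ≤ R)
    (hx : x ∈ barrierDomain R l η) (h : weightedDefect R l η K U x = 0) :
    U x ≤ barrier R l η K x :=
  sub_nonpos.1 (smoothTransition.zero_iff_nonpos.1
    ((mul_eq_zero_iff_right (sub_pos.2 (polarDiv_barrier_lt_of_mem hl hlR hx)).ne').1 h))

end WeightedDefect

section Sector

variable {R l η K ε s₀ a β₀ : ℝ} {U : ℝ × ℝ → ℝ} {p q : ℝ × ℝ}

lemma integral_weightedDefect_le_integral_side (hl : 0 < l) (hlR : 2 * l ≤ R) (hpq : p ≤ q)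
    (hdom : Icc p q ⊆ barrierDomain R l η) (hU : ∀ x ∈ Icc p q, ContDiffAt ℝ 2 U x)
    (hdiv : ∀ x ∈ Icc p q, x.1 / R ≤ polarDiv U x)
    (hright : ∀ t ∈ Icc p.2 q.2, U (q.1, t) ≤ barrier R l η K (q.1, t))
    (htop : ∀ s ∈ Icc p.1 q.1, U (s, q.2) ≤ barrier R l η K (s, q.2))
    (hbottom : ∀ s ∈ Icc p.1 q.1, U (s, p.2) ≤ barrier R l η K (s, p.2)) :
    ∫ x in Icc p q, weightedDefect R l η K U x
      ≤ p.1 * ∫ t in p.2..q.2, smoothTransition (U (p.1, t) - barrier R l η K (p.1, t))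
        * (1 - radialFlux U (p.1, t)) := by
  have hR : 0 < R := by linarith
  have hU_cont : ContinuousOn U (Icc p q) := fun x hx =>
    (hU x hx).continuousAt.continuousWithinAt
  have hpos : ∀ x ∈ Icc p q, x.1 ≠ 0 := fun x hx => (hR.trans_le (hdom hx).1).ne'
  have hb : ∀ x ∈ Icc p q, ContDiffAt ℝ 2 (barrier R l η K) x := fun x hx =>
    contDiffAt_barrier_of_mem hR hl (hdom hx)
  refine le_trans ?_ (integral_comp_sub_mul_polarDiv_sub_le smoothTransition.contDiff
    smoothTransition.monotone (fun t ht => smoothTransition.zero_of_nonpos ht) hpq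
    (hR.trans_le (hdom (left_mem_Icc.2 hpq)).1) hU hb hright htop hbottom)
  refine setIntegral_mono_on
    ((continuousOn_weightedDefect hR hl hdom hU_cont).integrableOn_compact isCompact_Icc)
    (ContinuousOn.integrableOn_compact isCompact_Icc ?_) measurableSet_Icc fun x hx =>
      mul_le_mul_of_nonneg_left (sub_le_sub_right (hdiv x hx) _) (smoothTransition.nonneg _)
  exact (continuousOn_smoothTransition_sub_barrier hR hl hdom hU_cont).mul fun x hx =>
    ((continuousAt_polarDiv (hU x hx) (hpos x hx)).sub
      (continuousAt_polarDiv (hb x hx) (hpos x hx))).continuousWithinAt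

lemma Icc_subset_barrierDomain {β : ℝ} (ha : R ≤ a) (haη : 0 < a - R + η) (hηl : η ≤ l / 2)
    (hβ : β < halfAngle R l) : Icc (a, -β) (R + l / 2, β) ⊆ barrierDomain R l η := fun x hx =>
  ⟨ha.trans hx.1.1, by linarith [hx.1.1], by linarith [hx.2.1],
    (abs_le.2 ⟨hx.1.2, hx.2.2⟩).trans_lt hβ⟩

/-- Of the sides of the sector only the inner arc `s = s₀` contributes to the estimate, because the
barrier is infinite on the lateral sides. -/
lemma integral_weightedDefect_le (hl : 0 < l) (hlR : 2 * l ≤ R) (hs₀ : s₀ ∈ Icc R (R + l / 2))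
    (hη : 0 < s₀ - R + η) (hηl : η ≤ l / 2)
    (hU : ∀ x ∈ Icc s₀ (R + l / 2) ×ˢ sectorAngles R l, ContDiffAt ℝ 2 U x)
    (hdiv : ∀ x ∈ Icc s₀ (R + l / 2) ×ˢ sectorAngles R l,
      x.1 / R ≤ polarDiv U x)
    (hout : ∀ t ∈ sectorAngles R l,
      U (R + l / 2, t) ≤ barrier R l η K (R + l / 2, t))
    (hin : ∀ β ∈ Ioo 0 (halfAngle R l), ∫ t in -β..β,
      smoothTransition (U (s₀, t) - barrier R l η K (s₀, t)) * (1 - radialFlux U (s₀, t)) ≤ ε)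
    (ha : s₀ ≤ a) (hβ₀ : β₀ < halfAngle R l) :
    ∫ x in Icc (a, -β₀) (R + l / 2, β₀), weightedDefect R l η K U x ≤ s₀ * ε := by
  have hR : 0 < R := by linarith
  obtain ⟨M, hM⟩ := (isCompact_Icc.prod isCompact_Icc).bddAbove_image
    fun x hx => (hU x hx).continuousAt.continuousWithinAt
  obtain ⟨β, ⟨hβ₀β, hβ⟩, hlateral⟩ := exists_lateral_le_barrier (η := η) (K := K) (M := M) hR hl hη
    (max_lt hβ₀ (halfAngle_pos hR hl))
  obtain ⟨hβ₀β, hβpos⟩ := max_lt_iff.1 hβ₀β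
  have hdom := Icc_subset_barrierDomain hs₀.1 hη hηl hβ
  have hsub : ∀ x ∈ Icc (s₀, -β) (R + l / 2, β),
      x ∈ Icc s₀ (R + l / 2) ×ˢ sectorAngles R l := fun x hx =>
    ⟨⟨hx.1.1, hx.2.1⟩, ⟨(neg_le_neg hβ.le).trans hx.1.2, hx.2.2.trans hβ.le⟩⟩
  have hUM : ∀ x ∈ Icc (s₀, -β) (R + l / 2, β), U x ≤ M := fun x hx =>
    hM (mem_image_of_mem U (hsub x hx))
  have hββ : -β ≤ β := by linarith
  calc ∫ x in Icc (a, -β₀) (R + l / 2, β₀), weightedDefect R l η K U x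
      ≤ ∫ x in Icc (s₀, -β) (R + l / 2, β), weightedDefect R l η K U x := by
        refine setIntegral_mono_set ((continuousOn_weightedDefect hR hl hdom fun x hx =>
          (hU x (hsub x hx)).continuousAt.continuousWithinAt).integrableOn_compact isCompact_Icc)
          (ae_restrict_of_forall_mem measurableSet_Icc fun x hx =>
            weightedDefect_nonneg hl hlR (hdom hx)) (LE.le.eventuallyLE ?_)
        exact Icc_subset_Icc ⟨ha, neg_le_neg hβ₀β.le⟩ ⟨le_rfl, hβ₀β.le⟩
    _ ≤ s₀ * ∫ t in -β..β,
        smoothTransition (U (s₀, t) - barrier R l η K (s₀, t)) * (1 - radialFlux U (s₀, t)) :=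
        integral_weightedDefect_le_integral_side hl hlR (p := (s₀, -β)) (q := (R + l / 2, β))
          ⟨hs₀.2, hββ⟩ hdom (fun x hx => hU x (hsub x hx)) (fun x hx => hdiv x (hsub x hx))
          (fun t ht => hout t ⟨(neg_le_neg hβ.le).trans ht.1, ht.2.trans hβ.le⟩)
          (fun s hs => (hUM (s, β) ⟨⟨hs.1, hββ⟩, ⟨hs.2, le_rfl⟩⟩).trans (hlateral s hs.1).1)
          (fun s hs => (hUM (s, -β) ⟨⟨hs.1, le_rfl⟩, ⟨hs.2, hββ⟩⟩).trans (hlateral s hs.1).2)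
    _ ≤ s₀ * ε := mul_le_mul_of_nonneg_left (hin β ⟨hβpos, hβ⟩) (hR.le.trans hs₀.1)

end Sector

section Limit

lemma eq_zero_of_setIntegral_nonpos {f : ℝ × ℝ → ℝ} {p q x : ℝ × ℝ}
    (hf : ContinuousOn f (Icc p q)) (hf₀ : ∀ x ∈ Icc p q, 0 ≤ f x)
    (hint : ∫ x in Icc p q, f x ≤ 0) (hx : x ∈ interior (Icc p q)) : f x = 0 := by
  have hae := (setIntegral_eq_zero_iff_of_nonneg_ae
    (ae_restrict_of_forall_mem measurableSet_Icc hf₀) (hf.integrableOn_compact isCompact_Icc)).1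
    (hint.antisymm (setIntegral_nonneg measurableSet_Icc hf₀))
  exact Measure.eqOn_open_of_ae_eq (ae_restrict_of_ae_restrict_of_subset interior_subset hae)
    isOpen_interior (hf.mono interior_subset) continuousOn_const hx

variable {R l η K : ℝ} {U : ℕ → ℝ × ℝ → ℝ} {V : ℝ × ℝ → ℝ}

lemma tendsto_integral_weightedDefect {p q : ℝ × ℝ} (hl : 0 < l) (hlR : 2 * l ≤ R)
    (hdom : Icc p q ⊆ barrierDomain R l η) (hU : ∀ n, ContinuousOn (U n) (Icc p q))
    (hUV : ∀ x ∈ Icc p q, Tendsto (fun n => U n x) atTop (𝓝 (V x))) :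
    Tendsto (fun n => ∫ x in Icc p q, weightedDefect R l η K (U n) x) atTop
      (𝓝 (∫ x in Icc p q, weightedDefect R l η K V x)) := by
  have hR : 0 < R := by linarith
  refine tendsto_integral_of_dominated_convergence
    (fun x => x.1 / R - polarDiv (barrier R l η K) x)
    (fun n => (continuousOn_weightedDefect hR hl hdom (hU n)).aestronglyMeasurable
      measurableSet_Icc)
    (((continuousOn_defect hR hl).mono hdom).integrableOn_compact isCompact_Icc)
    (fun n => ae_restrict_of_forall_mem measurableSet_Icc fun x hx => ?_)
    (ae_restrict_of_forall_mem measurableSet_Icc fun x hx => ?_)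
  · rw [norm_of_nonneg (weightedDefect_nonneg hl hlR (hdom hx))]
    exact weightedDefect_le hl hlR (hdom hx)
  · exact ((smoothTransition.continuous.tendsto _).comp
      ((hUV x hx).sub_const _)).mul_const _

lemma le_barrier_of_frequently_integral_le {x : ℝ × ℝ} (hl : 0 < l) (hlR : 2 * l ≤ R) (hη : 0 < η)
    (hηl : η ≤ l / 2)
    (hU : ∀ n, ContinuousOn (U n) (Ioc R (R + l / 2) ×ˢ sectorAngles R l))
    (hV : ContinuousOn V (Ioc R (R + l / 2) ×ˢ sectorAngles R l))
    (hUV : ∀ x ∈ Ioc R (R + l / 2) ×ˢ sectorAngles R l,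
      Tendsto (fun n => U n x) atTop (𝓝 (V x)))
    (hint : ∀ a > R, ∀ β < halfAngle R l, ∀ ε > 0, ∃ᶠ n in atTop,
      ∫ x in Icc (a, -β) (R + l / 2, β), weightedDefect R l η K (U n) x ≤ ε)
    (hx : x ∈ Ioo R (R + l / 2) ×ˢ Ioo (-halfAngle R l) (halfAngle R l)) :
    V x ≤ barrier R l η K x := by
  obtain ⟨a, hRa, hax⟩ := exists_between hx.1.1
  obtain ⟨β, hxβ, hβ⟩ := exists_between (abs_lt.2 hx.2)
  have hdom := Icc_subset_barrierDomain hRa.le (by linarith) hηl hβ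
  have hsub : Icc (a, -β) (R + l / 2, β)
      ⊆ Ioc R (R + l / 2) ×ˢ sectorAngles R l := fun y hy =>
    ⟨⟨hRa.trans_le hy.1.1, hy.2.1⟩, ⟨(neg_le_neg hβ.le).trans hy.1.2, hy.2.2.trans hβ.le⟩⟩
  have hlim := tendsto_integral_weightedDefect (K := K) hl hlR hdom
    (fun n => (hU n).mono hsub) fun y hy => hUV y (hsub hy)
  have hint_nonpos : ∫ y in Icc (a, -β) (R + l / 2, β), weightedDefect R l η K V y ≤ 0 :=
    le_of_forall_pos_le_add fun ε hε => (zero_add ε).symm ▸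
      le_of_tendsto_of_frequently hlim (hint a hRa β hβ ε hε)
  have hx_int : x ∈ interior (Icc (a, -β) (R + l / 2, β)) := by
    rw [Icc_prod_eq, interior_prod_eq, interior_Icc, interior_Icc]
    exact ⟨⟨hax, hx.1.2⟩, abs_lt.1 hxβ⟩
  exact le_barrier_of_weightedDefect_eq_zero hl hlR (hdom (interior_subset hx_int))
    (eq_zero_of_setIntegral_nonpos
      (continuousOn_weightedDefect (by linarith) hl hdom (hV.mono hsub))
      (fun y hy => weightedDefect_nonneg hl hlR (hdom hy)) hint_nonpos hx_int)

end Limit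

section InnerArc

variable {R l η K a β : ℝ} {U : ℝ × ℝ → ℝ}

lemma exists_arc_le_barrier (hl : 0 ≤ l) (hη : 0 < η) {I : Set ℝ} (hI : IsCompact I)
    (hU : ∀ t ∈ I, Tendsto U (𝓝[{x | R < x.1}] (R, t)) atBot) (ha : R < a) :
    ∃ s₀ ∈ Ioo R a, ∀ t ∈ I, U (s₀, t) ≤ barrier R l η K (s₀, t) := by
  have hev : ∀ᶠ s in 𝓝 R, ∀ t ∈ I, R < s → U (s, t) ≤ l * log η + K := by
    refine hI.eventually_forall_of_forall_eventually fun t ht => ?_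
    exact eventually_nhdsWithin_iff.1 ((hU t ht).eventually_le_atBot (l * log η + K))
  obtain ⟨s₀, hle, hs₀⟩ := ((hev.filter_mono nhdsWithin_le_nhds).and (Ioo_mem_nhdsGT ha)).exists
  exact ⟨s₀, hs₀, fun t ht =>
    (hle t ht hs₀.1).trans (le_barrier hl hη (by linarith [hs₀.1]))⟩

lemma integral_weightedDefect_nonpos_of_tendsto_atBot (hl : 0 < l) (hlR : 2 * l ≤ R) (hη : 0 < η)
    (hηl : η ≤ l / 2)
    (hU : ∀ x ∈ Ioc R (R + l / 2) ×ˢ sectorAngles R l, ContDiffAt ℝ 2 U x)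
    (hdiv : ∀ x ∈ Ioc R (R + l / 2) ×ˢ sectorAngles R l,
      x.1 / R ≤ polarDiv U x)
    (hout : ∀ t ∈ sectorAngles R l,
      U (R + l / 2, t) ≤ barrier R l η K (R + l / 2, t))
    (hbot : ∀ t ∈ sectorAngles R l,
      Tendsto U (𝓝[{x | R < x.1}] (R, t)) atBot)
    (ha : R < a) (hβ : β < halfAngle R l) :
    ∫ x in Icc (a, -β) (R + l / 2, β), weightedDefect R l η K U x ≤ 0 := by
  obtain ⟨s₀, hs₀, hle⟩ := exists_arc_le_barrier (K := K) hl.le hη isCompact_Icc hbot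
    (lt_min ha (by linarith : R < R + l / 2))
  obtain ⟨hs₀a, hs₀l⟩ := lt_min_iff.1 hs₀.2
  have hsub : Icc s₀ (R + l / 2) ×ˢ sectorAngles R l
      ⊆ Ioc R (R + l / 2) ×ˢ sectorAngles R l :=
    prod_mono (fun s hs => ⟨hs₀.1.trans_le hs.1, hs.2⟩) Subset.rfl
  refine (integral_weightedDefect_le hl hlR ⟨hs₀.1.le, hs₀l.le⟩ (by linarith [hs₀.1]) hηl
    (fun x hx => hU x (hsub hx)) (fun x hx => hdiv x (hsub hx)) hout (ε := 0)
    (fun θ hθ => ?_) hs₀a.le hβ).trans_eq (mul_zero _)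
  refine (intervalIntegral.integral_congr (g := 0) fun t ht => ?_).trans_le
    intervalIntegral.integral_zero.le
  rw [uIcc_of_le (by linarith [hθ.1])] at ht
  exact mul_eq_zero_of_left (smoothTransition.zero_of_nonpos (sub_nonpos.2
    (hle t ⟨(neg_le_neg hθ.2.le).trans ht.1, ht.2.trans hθ.2.le⟩))) _

end InnerArc

section InnerFlux

variable {R : ℝ}

lemma intervalIntegrable_one_sub_radialFlux {U : ℝ × ℝ → ℝ} {p q : ℝ} (hpq : p ≤ q) (hR : R ≠ 0)
    (hU : ∀ t ∈ Icc p q, ContDiffAt ℝ 2 U (R, t)) :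
    IntervalIntegrable (fun t => 1 - radialFlux U (R, t)) volume p q :=
  (continuousOn_const.sub (continuousOn_slice_snd fun t ht =>
    (contDiffAt_radialFlux (hU t ht) hR).continuousAt)).intervalIntegrable_of_Icc hpq

lemma tendsto_integral_one_sub_radialFlux {U : ℕ → ℝ × ℝ → ℝ} {p q : ℝ} (hpq : p ≤ q) (hR : R ≠ 0)
    (hU : ∀ n, ∀ t ∈ Icc p q, ContDiffAt ℝ 2 (U n) (R, t))
    (hlim : ∀ t ∈ Icc p q, Tendsto (fun n => radialFlux (U n) (R, t)) atTop (𝓝 1)) :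
    Tendsto (fun n => ∫ t in p..q, (1 - radialFlux (U n) (R, t))) atTop (𝓝 0) := by
  have hmem {t : ℝ} (ht : t ∈ uIoc p q) : t ∈ Icc p q :=
    Ioc_subset_Icc_self (uIoc_of_le hpq ▸ ht)
  rw [← intervalIntegral.integral_zero (a := p) (b := q) (μ := volume)]
  refine intervalIntegral.tendsto_integral_filter_of_dominated_convergence (fun _ => 2)
    (.of_forall fun n => (intervalIntegrable_one_sub_radialFlux hpq hR (hU n)).def'.1)
    (.of_forall fun n => ae_of_all _ fun t _ => ?_) intervalIntegrable_const
    (ae_of_all _ fun t ht => (sub_self (1 : ℝ)) ▸ (hlim t (hmem ht)).const_sub 1)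
  rw [norm_of_nonneg (one_sub_radialFlux_nonneg _ _)]
  linarith [(abs_le.1 (abs_radialFlux_le_one (U n) (R, t))).1]

lemma integral_weightedDefect_le_integral_one_sub_radialFlux {l η K a β : ℝ} {U : ℝ × ℝ → ℝ}
    (hl : 0 < l) (hlR : 2 * l ≤ R) (hη : 0 < η) (hηl : η ≤ l / 2)
    (hU : ∀ x ∈ Icc R (R + l / 2) ×ˢ sectorAngles R l, ContDiffAt ℝ 2 U x)
    (hdiv : ∀ x ∈ Icc R (R + l / 2) ×ˢ sectorAngles R l,
      x.1 / R ≤ polarDiv U x)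
    (hout : ∀ t ∈ sectorAngles R l,
      U (R + l / 2, t) ≤ barrier R l η K (R + l / 2, t))
    (ha : R ≤ a) (hβ : β < halfAngle R l) :
    ∫ x in Icc (a, -β) (R + l / 2, β), weightedDefect R l η K U x
      ≤ R * ∫ t in -halfAngle R l..halfAngle R l, (1 - radialFlux U (R, t)) := by
  have hR : 0 < R := by linarith
  have hω := halfAngle_pos hR hl
  have hflux := intervalIntegrable_one_sub_radialFlux (neg_le_self hω.le) hR.ne'
    fun t ht => hU (R, t) ⟨⟨le_rfl, by linarith⟩, ht⟩
  refine integral_weightedDefect_le hl hlR ⟨le_rfl, by linarith⟩ (by linarith) hηl hU hdiv hout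
    (fun θ hθ => ?_) ha hβ
  have hθω : -halfAngle R l ≤ -θ := neg_le_neg hθ.2.le
  have hθθ : -θ ≤ θ := neg_le_self hθ.1.le
  refine le_trans ?_ (intervalIntegral.integral_mono_interval hθω hθθ hθ.2.le
    (ae_of_all _ fun t => one_sub_radialFlux_nonneg U (R, t)) hflux)
  rw [intervalIntegral.integral_of_le hθθ, intervalIntegral.integral_of_le hθθ]
  exact integral_mono_of_nonneg
    (ae_of_all _ fun t => mul_nonneg (smoothTransition.nonneg _) (one_sub_radialFlux_nonneg U _))
    (hflux.1.mono_set (Ioc_subset_Ioc hθω hθ.2.le))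
    (ae_of_all _ fun t => mul_le_of_le_one_left (one_sub_radialFlux_nonneg U _)
      (smoothTransition.le_one _))

end InnerFlux

/-! ### Solutions outside a circle -/

/-- The part of `Ω` outside the closed disk of centre `z` and radius `R`; this is `D⁻` when `Ω` is
the disk `D(r)`. -/
def outerPart (Ω : Set (ℝ × ℝ)) (z : ℝ × ℝ) (R : ℝ) : Set (ℝ × ℝ) :=
  {p | p ∈ Ω ∧ R < enorm2 (p - z)}

/-- The part in `Ω` of the circle of centre `z` and radius `R`; this is `C` when `Ω` is the disk
`D(r)`. -/
def circlePart (Ω : Set (ℝ × ℝ)) (z : ℝ × ℝ) (R : ℝ) : Set (ℝ × ℝ) :=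
  {p | p ∈ Ω ∧ enorm2 (p - z) = R}

section Geometry

variable {Ω : Set (ℝ × ℝ)} {z : ℝ × ℝ} {R c : ℝ} {x : ℝ × ℝ}

lemma isOpen_outerPart (hΩ : IsOpen Ω) (z : ℝ × ℝ) (R : ℝ) : IsOpen (outerPart Ω z R) :=
  hΩ.inter <| isOpen_lt continuous_const <|
    continuous_enorm2.comp (continuous_id.sub continuous_const)

lemma polar_mem_outerPart_iff (hx : 0 ≤ x.1) (hxΩ : polar z c x ∈ Ω) :
    polar z c x ∈ outerPart Ω z R ↔ R < x.1 := by
  rw [outerPart, mem_ofPred_eq, enorm2_polar_sub, abs_of_nonneg hx, and_iff_right hxΩ]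

lemma polar_mem_circlePart {t : ℝ} (hR : 0 ≤ R) (hΩ : polar z c (R, t) ∈ Ω) :
    polar z c (R, t) ∈ circlePart Ω z R :=
  ⟨hΩ, by rw [enorm2_polar_sub, abs_of_nonneg hR]⟩

lemma map_polar_nhdsWithin (hΩ : IsOpen Ω) {t : ℝ} (hR : 0 < R) (ht : polar z c (R, t) ∈ Ω) :
    map (polar z c) (𝓝[{x | R < x.1}] (R, t))
      = 𝓝[outerPart Ω z R] (polar z c (R, t)) := by
  have hmem : ∀ᶠ x in 𝓝 (R, t), polar z c x ∈ outerPart Ω z R ↔ R < x.1 := by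
    filter_upwards [continuousAt_fst.eventually_const_lt hR,
      (continuous_polar z c).continuousAt.preimage_mem_nhds
        (hΩ.mem_nhds ht)] with x hx hxΩ
    exact polar_mem_outerPart_iff hx.le hxΩ
  have hpre : 𝓝[{x | R < x.1}] (R, t) = 𝓝[polar z c ⁻¹' outerPart Ω z R] (R, t) :=
    nhdsWithin_eq_iff_eventuallyEq.2 (hmem.mono fun x hx => propext hx.symm)
  rw [hpre, nhdsWithin, Filter.map_inf_principal_preimage, map_polar_nhds z c hR.ne', nhdsWithin]

lemma exists_sector_subset (hΩ : IsOpen Ω) (hR : 0 < R) (hP : polar z c (R, 0) ∈ Ω) :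
    ∃ l > 0, 2 * l ≤ R ∧ ∀ x ∈ Icc R (R + l / 2) ×ˢ sectorAngles R l,
      polar z c x ∈ Ω := by
  obtain ⟨ρ, hρ, hball⟩ := Metric.nhds_basis_closedBall.mem_iff.1
    ((continuous_polar z c).continuousAt.preimage_mem_nhds (hΩ.mem_nhds hP))
  rw [← closedBall_prod_same, Real.closedBall_eq_Icc, Real.closedBall_eq_Icc] at hball
  have hcont : Continuous (halfAngle R) := by
    unfold halfAngle
    fun_prop
  have hangle : ∀ᶠ l in 𝓝[>] 0, halfAngle R l < ρ :=
    ((hcont.tendsto' 0 0 (by simp [halfAngle])).eventually_lt_const hρ).filter_mono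
      nhdsWithin_le_nhds
  have hsmall (b : ℝ) (hb : 0 < b) : ∀ᶠ l in 𝓝[>] (0 : ℝ), l < b :=
    (eventually_lt_nhds hb).filter_mono nhdsWithin_le_nhds
  obtain ⟨l, hlρ, hlR, hl, hl0⟩ := (hangle.and <| (hsmall (R / 2) (by positivity)).and <|
    (hsmall ρ hρ).and self_mem_nhdsWithin).exists
  refine ⟨l, hl0, by linarith, fun x hx => hball ⟨⟨?_, ?_⟩, ⟨?_, ?_⟩⟩⟩ <;>
    linarith [hx.1.1, hx.1.2, hx.2.1, hx.2.2]

end Geometry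

section Barrier

variable {R l K : ℝ}

lemma tendsto_atBot_of_le_barrier {V : ℝ × ℝ → ℝ} (hR : 0 < R) (hl : 0 < l)
    (hV : ∀ η ∈ Ioc 0 (l / 2), ∀ x ∈ Ioo R (R + l / 2) ×ˢ Ioo (-halfAngle R l) (halfAngle R l),
      V x ≤ barrier R l η K x) :
    Tendsto V (𝓝[{x | R < x.1}] (R, 0)) atBot := by
  have hlog : Tendsto (fun x : ℝ × ℝ => log (x.1 - R + (x.1 - R))) (𝓝[{x | R < x.1}] (R, 0))
      atBot := by
    refine tendsto_log_nhdsGT_zero.comp (tendsto_nhdsWithin_iff.2 ⟨?_, ?_⟩)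
    · have hcont : Continuous fun x : ℝ × ℝ => x.1 - R + (x.1 - R) := by fun_prop
      simpa using (hcont.tendsto (R, 0)).mono_left nhdsWithin_le_nhds
    · filter_upwards [self_mem_nhdsWithin] with x (hx : R < x.1)
      rw [mem_Ioi]
      linarith
  have hcos : Tendsto (fun x : ℝ × ℝ => 4 * l * log (cos (R / (4 * l) * x.2)))
      (𝓝[{x | R < x.1}] (R, 0)) (𝓝 (4 * l * log (cos (R / (4 * l) * 0)))) := by
    have hcont : Continuous fun x : ℝ × ℝ => cos (R / (4 * l) * x.2) := by fun_prop
    exact (((hcont.continuousAt (x := (R, 0))).log (by simp)).const_mul _).tendsto.mono_left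
      nhdsWithin_le_nhds
  have hbarrier : Tendsto (fun x : ℝ × ℝ => barrier R l (x.1 - R) K x)
      (𝓝[{x | R < x.1}] (R, 0)) atBot :=
    tendsto_atBot_add_const_right _ K
      ((hlog.const_mul_atBot hl).atBot_add hcos.neg)
  refine tendsto_atBot_mono' _ ?_ hbarrier
  filter_upwards [self_mem_nhdsWithin, nhdsWithin_le_nhds (prod_mem_nhds
    (Iio_mem_nhds (show R < R + l / 2 by linarith))
    (Ioo_mem_nhds (neg_lt_zero.2 (halfAngle_pos hR hl)) (halfAngle_pos hR hl)))]
    with x (hx : R < x.1) hxS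
  have hxl : x.1 < R + l / 2 := hxS.1
  exact hV (x.1 - R) ⟨sub_pos.2 hx, by linarith⟩ x ⟨⟨hx, hxl⟩, hxS.2⟩

end Barrier

/-! ### Convergence -/

lemma continuousOn_of_tendstoUniformlyOn {u : ℕ → ℝ × ℝ → ℝ} {v : ℝ × ℝ → ℝ} {D : Set (ℝ × ℝ)}
    (hD : IsOpen D) (hu : ∀ n, ContinuousOn (u n) D)
    (hconv : ∀ K, IsCompact K → K ⊆ D → TendstoUniformlyOn u v atTop K) : ContinuousOn v D :=
  ((tendstoLocallyUniformlyOn_iff_forall_isCompact hD).2 fun K hKD hK =>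
    hconv K hK hKD).continuousOn (.of_forall hu)

lemma exists_eventually_le_barrier {R l a : ℝ} {J : Set ℝ} {U : ℕ → ℝ × ℝ → ℝ} {V : ℝ × ℝ → ℝ}
    (hl : 0 ≤ l) (ha : R < a) (hJ : IsCompact J) (hV : ContinuousOn (fun t => V (a, t)) J)
    (hUV : TendstoUniformlyOn (fun n t => U n (a, t)) (fun t => V (a, t)) atTop J) :
    ∃ K, ∀ᶠ n in atTop, ∀ η > 0, ∀ t ∈ J, U n (a, t) ≤ barrier R l η K (a, t) := by
  obtain ⟨B, hB⟩ := hJ.bddAbove_image hV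
  refine ⟨B + 1 - l * log (a - R), ?_⟩
  filter_upwards [Metric.tendstoUniformlyOn_iff.1 hUV 1 one_pos] with n hn η hη t ht
  have hBt : V (a, t) ≤ B := hB (mem_image_of_mem _ ht)
  have hdist := (abs_lt.1 (hn t ht)).1
  have hbarrier := le_barrier (K := B + 1 - l * log (a - R)) (x := (a, t)) hl (sub_pos.2 ha)
    (by linarith : a - R ≤ a - R + η)
  linarith

section Sector

variable {Ω : Set (ℝ × ℝ)} {z : ℝ × ℝ} {R l H c K η : ℝ} {u : ℕ → ℝ × ℝ → ℝ} {v : ℝ × ℝ → ℝ}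

lemma tendsto_radialFlux_comp_polar {w : ℕ → ℝ × ℝ → ℝ} {t : ℝ} (hHR : 2 * H * R = 1)
    (hR : R ≠ 0) (hw : ∀ n, DifferentiableAt ℝ (w n) (polar z c (R, t)))
    (hN : Tendsto (fun n => normalVec (w n) (polar z c (R, t))) atTop
      (𝓝 (2 * H * (z.1 - (polar z c (R, t)).1), 2 * H * (z.2 - (polar z c (R, t)).2), 0))) :
    Tendsto (fun n => radialFlux (w n ∘ polar z c) (R, t)) atTop (𝓝 1) := by
  simp_rw [fun n => radialFlux_comp_polar z c (x := (R, t)) (hw n) hR]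
  convert ((hN.fst_nhds.const_mul (cos (c + t))).add
    (hN.snd_nhds.fst_nhds.const_mul (sin (c + t)))).neg using 2
  simp only [polar]
  linear_combination (-2 * H * R) * cos_sq_add_sin_sq (c + t) - hHR

lemma IsCMCSolution.div_le_polarDiv {D : Set (ℝ × ℝ)} {f : ℝ × ℝ → ℝ} {x : ℝ × ℝ}
    (hf : IsCMCSolution H D f) (hD : IsOpen D) (hHR : 2 * H * R = 1) (hxD : polar z c x ∈ D)
    (hx : x.1 ≠ 0) : x.1 / R ≤ polarDiv (f ∘ polar z c) x := by
  rw [hf.polarDiv_comp_polar z c hD hxD hx, eq_one_div_of_mul_eq_one_left hHR]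
  exact (one_div_mul_eq_div R x.1).ge

lemma IsCMCSolution.integral_weightedDefect_nonpos {f : ℝ × ℝ → ℝ} {a β : ℝ} (hΩ : IsOpen Ω)
    (hf : IsCMCSolution H (outerPart Ω z R) f) (hHR : 2 * H * R = 1)
    (hbot : ∀ P ∈ circlePart Ω z R, Tendsto f (𝓝[outerPart Ω z R] P) atBot)
    (hl : 0 < l) (hlR : 2 * l ≤ R) (hη : 0 < η) (hηl : η ≤ l / 2)
    (hsec : ∀ x ∈ Icc R (R + l / 2) ×ˢ sectorAngles R l, polar z c x ∈ Ω)
    (hout : ∀ t ∈ sectorAngles R l,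
      (f ∘ polar z c) (R + l / 2, t) ≤ barrier R l η K (R + l / 2, t))
    (ha : R < a) (hβ : β < halfAngle R l) :
    ∫ x in Icc (a, -β) (R + l / 2, β), weightedDefect R l η K (f ∘ polar z c) x ≤ 0 := by
  have hR : 0 < R := by linarith
  have houter := isOpen_outerPart hΩ z R
  have hmem (x) (hx : x ∈ Ioc R (R + l / 2) ×ˢ sectorAngles R l) :
      polar z c x ∈ outerPart Ω z R :=
    (polar_mem_outerPart_iff (hR.trans hx.1.1).le
      (hsec x ⟨Ioc_subset_Icc_self hx.1, hx.2⟩)).2 hx.1.1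
  refine integral_weightedDefect_nonpos_of_tendsto_atBot hl hlR hη hηl
    (fun x hx => (hf.contDiffAt houter (hmem x hx)).comp x (contDiff_polar z c).contDiffAt)
    (fun x hx => hf.div_le_polarDiv houter hHR (hmem x hx) (hR.trans hx.1.1).ne')
    hout (fun t ht => ?_) ha hβ
  have htΩ := hsec (R, t) ⟨⟨le_rfl, by linarith⟩, ht⟩
  rw [← tendsto_map'_iff, map_polar_nhdsWithin hΩ hR htΩ]
  exact hbot _ (polar_mem_circlePart hR.le htΩ)

lemma eventually_integral_weightedDefect_le {w : ℕ → ℝ × ℝ → ℝ} {a β ε : ℝ} (hΩ : IsOpen Ω)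
    (hw : ∀ n, IsCMCSolution H Ω (w n)) (hHR : 2 * H * R = 1)
    (hN : ∀ Q ∈ circlePart Ω z R, Tendsto (fun n => normalVec (w n) Q) atTop
      (𝓝 (2 * H * (z.1 - Q.1), 2 * H * (z.2 - Q.2), 0)))
    (hl : 0 < l) (hlR : 2 * l ≤ R) (hη : 0 < η) (hηl : η ≤ l / 2)
    (hsec : ∀ x ∈ Icc R (R + l / 2) ×ˢ sectorAngles R l, polar z c x ∈ Ω)
    (hout : ∀ᶠ n in atTop, ∀ t ∈ sectorAngles R l,
      (w n ∘ polar z c) (R + l / 2, t) ≤ barrier R l η K (R + l / 2, t))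
    (ha : R ≤ a) (hβ : β < halfAngle R l) (hε : 0 < ε) :
    ∀ᶠ n in atTop,
      ∫ x in Icc (a, -β) (R + l / 2, β), weightedDefect R l η K (w n ∘ polar z c) x ≤ ε := by
  have hR : 0 < R := by linarith
  have hC2 (n x) (hx : x ∈ Icc R (R + l / 2) ×ˢ sectorAngles R l) :
      ContDiffAt ℝ 2 (w n ∘ polar z c) x :=
    ((hw n).contDiffAt hΩ (hsec x hx)).comp x (contDiff_polar z c).contDiffAt
  have harc (t) (ht : t ∈ sectorAngles R l) :
      (R, t) ∈ Icc R (R + l / 2) ×ˢ sectorAngles R l :=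
    ⟨⟨le_rfl, by linarith⟩, ht⟩
  have hflux := (tendsto_integral_one_sub_radialFlux (neg_le_self (halfAngle_pos hR hl).le) hR.ne'
    (fun n t ht => hC2 n _ (harc t ht)) fun t ht => tendsto_radialFlux_comp_polar hHR hR.ne'
      (fun n => ((hw n).contDiffAt hΩ (hsec _ (harc t ht))).differentiableAt two_ne_zero)
      (hN _ (polar_mem_circlePart hR.le (hsec _ (harc t ht))))).const_mul R
  rw [mul_zero] at hflux
  filter_upwards [hout, hflux.eventually_le_const hε] with n hn hle
  exact (integral_weightedDefect_le_integral_one_sub_radialFlux hl hlR hη hηl (hC2 n)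
    (fun x hx => (hw n).div_le_polarDiv hΩ hHR (hsec x hx) (hR.trans_le hx.1.1).ne')
    hn ha hβ).trans hle

lemma IsDivergenceLine.exists_tendsto_normalVec {w : ℕ → ℝ × ℝ → ℝ}
    (hC : IsDivergenceLine H Ω w (circlePart Ω z (1 / (2 * H)))) :
    ∃ φ : ℕ → ℕ, StrictMono φ ∧ ∀ Q ∈ circlePart Ω z (1 / (2 * H)),
      Tendsto (fun n => normalVec (w (φ n)) Q) atTop
        (𝓝 (2 * H * (z.1 - Q.1), 2 * H * (z.2 - Q.2), 0)) := by
  obtain ⟨z₁, -, hz₁, hconn, hnontriv, hφ⟩ := hC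
  obtain rfl := eq_center_of_infinite (hconn.isPreconnected.infinite_of_nontrivial hnontriv)
    (fun p hp => hp.2) hz₁
  exact hφ

lemma frequently_integral_weightedDefect_le_of_isDivergenceLine {w : ℕ → ℝ × ℝ → ℝ} {a β ε : ℝ}
    (hΩ : IsOpen Ω) (hw : ∀ n, IsCMCSolution H Ω (w n))
    (huw : ∀ n, ∀ p ∈ outerPart Ω z R, u n p = w n p)
    (hC : IsDivergenceLine H Ω w (circlePart Ω z R)) (hHR : 2 * H * R = 1)
    (hl : 0 < l) (hlR : 2 * l ≤ R) (hη : 0 < η) (hηl : η ≤ l / 2)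
    (hsec : ∀ x ∈ Icc R (R + l / 2) ×ˢ sectorAngles R l, polar z c x ∈ Ω)
    (hout : ∀ᶠ n in atTop, ∀ t ∈ sectorAngles R l,
      (u n ∘ polar z c) (R + l / 2, t) ≤ barrier R l η K (R + l / 2, t))
    (ha : R < a) (hβ : β < halfAngle R l) (hε : 0 < ε) :
    ∃ᶠ n in atTop,
      ∫ x in Icc (a, -β) (R + l / 2, β), weightedDefect R l η K (u n ∘ polar z c) x ≤ ε := by
  have hR : 0 < R := by linarith
  have huw' (n x) (hx : x ∈ Ioc R (R + l / 2) ×ˢ sectorAngles R l) :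
      u n (polar z c x) = w n (polar z c x) :=
    huw n _ ((polar_mem_outerPart_iff (hR.trans hx.1.1).le
      (hsec x ⟨Ioc_subset_Icc_self hx.1, hx.2⟩)).2 hx.1.1)
  rw [eq_one_div_of_mul_eq_one_right hHR] at hC
  obtain ⟨φ, hφ, hN⟩ := hC.exists_tendsto_normalVec
  rw [← eq_one_div_of_mul_eq_one_right hHR] at hN
  have hev := eventually_integral_weightedDefect_le hΩ (fun n => hw (φ n)) hHR hN hl hlR hη hηl
    hsec (hφ.tendsto_atTop.eventually (hout.mono fun n hn t ht =>
      (huw' n (R + l / 2, t) ⟨⟨by linarith, le_rfl⟩, ht⟩).ge.trans (hn t ht))) ha.le hβ hε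
  refine hφ.tendsto_atTop.frequently (hev.frequently.mono fun n hn => ?_)
  refine (setIntegral_congr_fun measurableSet_Icc fun x hx => ?_).trans_le hn
  have hxS : x ∈ Ioc R (R + l / 2) ×ˢ sectorAngles R l :=
    ⟨⟨ha.trans_le hx.1.1, hx.2.1⟩, by linarith [hx.1.2], hx.2.2.trans hβ.le⟩
  simp only [weightedDefect, Function.comp_apply, huw' _ _ hxS]

lemma exists_eventually_comp_polar_le_barrier (hΩ : IsOpen Ω)
    (hu : ∀ n, ContinuousOn (u n) (outerPart Ω z R))
    (hconv : ∀ K, IsCompact K → K ⊆ outerPart Ω z R → TendstoUniformlyOn u v atTop K)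
    (hR : 0 ≤ R) (hl : 0 < l)
    (hsec : ∀ x ∈ Icc R (R + l / 2) ×ˢ sectorAngles R l, polar z c x ∈ Ω) :
    ∃ K, ∀ᶠ n in atTop, ∀ η > 0, ∀ t ∈ sectorAngles R l,
      (u n ∘ polar z c) (R + l / 2, t) ≤ barrier R l η K (R + l / 2, t) := by
  let arc := fun t => polar z c (R + l / 2, t)
  have harc : Continuous arc :=
    (continuous_polar z c).comp (Continuous.prodMk_right _)
  have hmaps : MapsTo arc (sectorAngles R l) (outerPart Ω z R) := fun t ht =>
    (polar_mem_outerPart_iff (add_nonneg hR (by linarith))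
      (hsec _ ⟨⟨by linarith, le_rfl⟩, ht⟩)).2 (by linarith)
  exact exists_eventually_le_barrier (U := fun n => u n ∘ polar z c) (V := v ∘ polar z c) hl.le
    (by linarith) isCompact_Icc
    ((continuousOn_of_tendstoUniformlyOn (isOpen_outerPart hΩ z R) hu hconv).comp
      harc.continuousOn hmaps)
    (((hconv _ (isCompact_Icc.image harc) hmaps.image_subset).comp arc).mono
      (subset_preimage_image _ _))

lemma comp_polar_le_barrier (hΩ : IsOpen Ω) (hu : ∀ n, ContinuousOn (u n) (outerPart Ω z R))
    (hconv : ∀ K, IsCompact K → K ⊆ outerPart Ω z R → TendstoUniformlyOn u v atTop K)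
    (hl : 0 < l) (hlR : 2 * l ≤ R) (hη : 0 < η) (hηl : η ≤ l / 2)
    (hsec : ∀ x ∈ Icc R (R + l / 2) ×ˢ sectorAngles R l, polar z c x ∈ Ω)
    (hint : ∀ a > R, ∀ β < halfAngle R l, ∀ ε > 0, ∃ᶠ n in atTop,
      ∫ x in Icc (a, -β) (R + l / 2, β), weightedDefect R l η K (u n ∘ polar z c) x ≤ ε)
    {x : ℝ × ℝ} (hx : x ∈ Ioo R (R + l / 2) ×ˢ Ioo (-halfAngle R l) (halfAngle R l)) :
    (v ∘ polar z c) x ≤ barrier R l η K x := by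
  have hmaps : MapsTo (polar z c) (Ioc R (R + l / 2) ×ˢ sectorAngles R l)
      (outerPart Ω z R) := fun y hy =>
    (polar_mem_outerPart_iff (by linarith [hy.1.1])
      (hsec y ⟨Ioc_subset_Icc_self hy.1, hy.2⟩)).2 hy.1.1
  have hpolar {s} : ContinuousOn (polar z c) s := (continuous_polar z c).continuousOn
  refine le_barrier_of_frequently_integral_le hl hlR hη hηl
    (fun n => (hu n).comp hpolar hmaps)
    ((continuousOn_of_tendstoUniformlyOn (isOpen_outerPart hΩ z R) hu hconv).comp hpolar hmaps)
    (fun y hy => ?_) hint hx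
  exact (hconv _ isCompact_singleton (singleton_subset_iff.2 (hmaps hy))).tendsto_at
    (mem_singleton _)

end Sector

theorem stmt_11_general {H : ℝ} (hH : 0 < H) {Ω : Set (ℝ × ℝ)} (hΩ : IsOpen Ω) (z : ℝ × ℝ)
    {u : ℕ → ℝ × ℝ → ℝ} {v : ℝ × ℝ → ℝ}
    (hu : ∀ n, IsCMCSolution H (outerPart Ω z (1 / (2 * H))) (u n))
    (hconv : ∀ K, IsCompact K → K ⊆ outerPart Ω z (1 / (2 * H)) → TendstoUniformlyOn u v atTop K)
    (halt : (∀ n, ∀ P ∈ circlePart Ω z (1 / (2 * H)),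
        Tendsto (u n) (𝓝[outerPart Ω z (1 / (2 * H))] P) atBot) ∨
      ∃ w : ℕ → ℝ × ℝ → ℝ, (∀ n, IsCMCSolution H Ω (w n)) ∧
        (∀ n, ∀ p ∈ outerPart Ω z (1 / (2 * H)), u n p = w n p) ∧
        IsDivergenceLine H Ω w (circlePart Ω z (1 / (2 * H)))) :
    ∀ P ∈ circlePart Ω z (1 / (2 * H)),
      Tendsto v (𝓝[outerPart Ω z (1 / (2 * H))] P) atBot := by
  intro P hP
  have hHR : 2 * H * (1 / (2 * H)) = 1 := mul_one_div_cancel (by positivity)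
  have hR : 0 < 1 / (2 * H) := by positivity
  set R := 1 / (2 * H)
  have hcont (n) : ContinuousOn (u n) (outerPart Ω z R) := (hu n).1.continuousOn
  obtain ⟨c, rfl⟩ := exists_polar_eq hP.2
  obtain ⟨l, hl, hlR, hsec⟩ := exists_sector_subset hΩ hR hP.1
  obtain ⟨K, hK⟩ := exists_eventually_comp_polar_le_barrier hΩ hcont hconv hR.le hl hsec
  rw [← map_polar_nhdsWithin hΩ hR hP.1, tendsto_map'_iff]
  refine tendsto_atBot_of_le_barrier (K := K) hR hl fun η ⟨hη, hηl⟩ x hx =>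
    comp_polar_le_barrier hΩ hcont hconv hl hlR hη hηl hsec (fun a ha β hβ ε hε => ?_) hx
  have hout := hK.mono fun n hn => hn η hη
  rcases halt with hbot | ⟨w, hw, huw, hC⟩
  · exact (hout.mono fun n hn => ((hu n).integral_weightedDefect_nonpos hΩ hHR (hbot n)
      hl hlR hη hηl hsec hn ha hβ).trans hε.le).frequently
  · exact frequently_integral_weightedDefect_le_of_isDivergenceLine hΩ hw huw hC hHR
      hl hlR hη hηl hsec hout ha hβ hε

/-- if a sequence of solutions on `D⁻` converges (with gradients) to a
solution `u` and either (1a) every `u_n` tends to `-∞` on the concave boundary arc `C`,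
or (1b) the `u_n` extend to `D(r)` with `C` a divergence line of the extensions, then
`u` tends to `-∞` at every point of `C`. -/
theorem stmt_11 (H r : ℝ) (hH : 0 < H) (hr : 0 < r) (hr' : r < 1 / (2 * H))
    (u : ℕ → ℝ × ℝ → ℝ) (v : ℝ × ℝ → ℝ)
    (hu : ∀ n, IsCMCSolution H
      {p : ℝ × ℝ | enorm2 p < r ∧ 1 / (2 * H) < enorm2 (p - (1 / (2 * H), 0))} (u n))
    (hv : IsCMCSolution H
      {p : ℝ × ℝ | enorm2 p < r ∧ 1 / (2 * H) < enorm2 (p - (1 / (2 * H), 0))} v)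
    (hconv : ∀ K : Set (ℝ × ℝ), IsCompact K →
      K ⊆ {p : ℝ × ℝ | enorm2 p < r ∧ 1 / (2 * H) < enorm2 (p - (1 / (2 * H), 0))} →
      TendstoUniformlyOn (fun n p => u n p) v atTop K ∧
      TendstoUniformlyOn (fun n p => ((pdx (u n) p, pdy (u n) p) : ℝ × ℝ))
        (fun p => (pdx v p, pdy v p)) atTop K)
    (halt :
      (∀ n, ∀ P ∈ {p : ℝ × ℝ | enorm2 p < r ∧ enorm2 (p - (1 / (2 * H), 0)) = 1 / (2 * H)},
        ∀ M : ℝ, ∃ δ > 0,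
          ∀ Q ∈ {p : ℝ × ℝ | enorm2 p < r ∧ 1 / (2 * H) < enorm2 (p - (1 / (2 * H), 0))},
            enorm2 (Q - P) < δ → u n Q < -M) ∨
      (∃ w : ℕ → ℝ × ℝ → ℝ,
        (∀ n, IsCMCSolution H {p : ℝ × ℝ | enorm2 p < r} (w n)) ∧
        (∀ n, ∀ p ∈ {p : ℝ × ℝ | enorm2 p < r ∧
            1 / (2 * H) < enorm2 (p - (1 / (2 * H), 0))}, u n p = w n p) ∧
        IsDivergenceLine H {p : ℝ × ℝ | enorm2 p < r} w
          {p : ℝ × ℝ | enorm2 p < r ∧ enorm2 (p - (1 / (2 * H), 0)) = 1 / (2 * H)})) :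
    ∀ P ∈ {p : ℝ × ℝ | enorm2 p < r ∧ enorm2 (p - (1 / (2 * H), 0)) = 1 / (2 * H)},
      ∀ M : ℝ, ∃ δ > 0,
        ∀ Q ∈ {p : ℝ × ℝ | enorm2 p < r ∧ 1 / (2 * H) < enorm2 (p - (1 / (2 * H), 0))},
          enorm2 (Q - P) < δ → v Q < -M := by
  have hdisk : IsOpen {p : ℝ × ℝ | enorm2 p < r} := isOpen_lt continuous_enorm2 continuous_const
  exact fun P hP => tendsto_nhdsWithin_atBot_iff.1 <|
    stmt_11_general hH hdisk (1 / (2 * H), 0) hu (fun K hK hKD => (hconv K hK hKD).1)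
      (halt.imp_left fun hbot n P hP => tendsto_nhdsWithin_atBot_iff.2 (hbot n P hP)) P hP
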